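/- arXiv:2210.00561 — 5 statements merged into one kernel-verified Lean document; each statement's English description precedes it below -/
import Mathlib

section
/- Let n ≥ 3 and k ≥ 3 be odd integers, and let −d be the squarefree part of 1 − 2k^n (so d > 0 and 1 − 2k^n = −d·s² for some positive integer s). Then n divides h(−d), the class number of the imaginary quadratic field ℚ(√(1 − 2k^n)). -/
open IntermediateField NumberField

/-- The quadratic field `ℚ(√D)`, realized inside `ℂ` by adjoining the principal
square root of `D`. -/
noncomputable def quadField (D : ℤ) : IntermediateField ℚ ℂ :=
  ℚ⟮(D : ℂ) ^ ((1 : ℂ) / 2)⟯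

/-- The class number of the quadratic field `ℚ(√D)`. -/
noncomputable def quadClassNumber (D : ℤ) : ℕ :=
  Nat.card (ClassGroup (𝓞 (quadField D)))

/-!
Put `D = -d` and `α = 1 + s√D`. Then `α² = 2β` with `β` of norm `k²ⁿ` and coprime to its
conjugate, so `(β) = 𝔅ⁿ` in `𝓞 = ℤ[√D]`, and it suffices to see that the class of `𝔅` has order
exactly `n`. If not, then for some prime `p = 2m + 1` dividing `n` the element `β` is a `p`-th power
up to a unit; units being fourth roots of unity, it is a `p`-th power, and `α² = 2β` then gives
`δᵖ = 2ᵐ α` for some `δ ∈ 𝓞`. So `Re δᵖ = 2ᵐ`, and as `Re δ` is odd and divides `Re δᵖ`, we get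
`Re δ = ±1`. Finally, for `δ` of real part `1` and norm `2(2t + 1)` with `t ≠ 0`, the integer
`2⁻ᵐ Re δᵖ` is never `±1`: modulo `p` the sign would have to be the quadratic character `(2/p)`,
whereas expanding in powers of `2` shows that `2⁻ᵐ Re δᵖ` differs from `(2/p)`.
-/

/-! ### Classes of exact order in Dedekind domains -/

theorem dvd_card_classGroup_of_span_singleton_eq_pow {R : Type*} [CommRing R] [IsDedekindDomain R]
    {b : R} {n : ℕ} {B : Ideal R} (hb : b ≠ 0) (hn : n ≠ 0) (hB : Ideal.span {b} = B ^ n)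
    (hpow : ∀ p : ℕ, p.Prime → p ∣ n → ∀ g : R, ¬Associated b (g ^ p)) :
    n ∣ Nat.card (ClassGroup R) := by
  have hB0 : B ≠ 0 := by
    rintro rfl
    exact hb (Ideal.span_singleton_eq_bot.mp (hB.trans (zero_pow hn)))
  have mk0_pow_eq_one_iff (i : ℕ) :
      ClassGroup.mk0 ⟨B, mem_nonZeroDivisors_of_ne_zero hB0⟩ ^ i = 1 ↔ (B ^ i).IsPrincipal := by
    rw [← map_pow]
    exact ClassGroup.mk0_eq_one_iff _
  have orderOf_eq : orderOf (ClassGroup.mk0 ⟨B, mem_nonZeroDivisors_of_ne_zero hB0⟩) = n := by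
    refine orderOf_eq_of_pow_and_pow_div_prime (Nat.pos_of_ne_zero hn) ?_ fun p hp hpn hone ↦ ?_
    · exact (mk0_pow_eq_one_iff n).mpr (hB ▸ ⟨⟨b, rfl⟩⟩)
    · obtain ⟨g, hg⟩ := ((mk0_pow_eq_one_iff (n / p)).mp hone).principal
      refine hpow p hp hpn g (Ideal.span_singleton_eq_span_singleton.mp ?_)
      rw [← Ideal.span_singleton_pow, Ideal.span, ← Ideal.submodule_span_eq, ← hg, ← pow_mul,
        Nat.div_mul_cancel hpn]
      exact hB
  exact orderOf_eq ▸ orderOf_dvd_natCard _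

theorem dvd_card_classGroup_of_mul_eq_pow {R : Type*} [CommRing R] [IsDedekindDomain R]
    {b b' c : R} {n : ℕ} (hb : b ≠ 0) (hn : n ≠ 0) (hbb' : IsCoprime b b') (hmul : b * b' = c ^ n)
    (hpow : ∀ p : ℕ, p.Prime → p ∣ n → ∀ g : R, ¬Associated b (g ^ p)) :
    n ∣ Nat.card (ClassGroup R) := by
  classical
  have hmul_span : Ideal.span {b} * Ideal.span {b'} = Ideal.span {c} ^ n := by
    rw [Ideal.span_singleton_mul_span_singleton, hmul, Ideal.span_singleton_pow]
  obtain ⟨B, hB⟩ := exists_eq_pow_of_mul_eq_pow_of_coprime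
    (Ideal.isCoprime_span_singleton_iff _ _ |>.mpr hbb') hmul_span
  exact dvd_card_classGroup_of_span_singleton_eq_pow hb hn hB hpow

theorem exists_pow_eq_of_associated_pow {M : Type*} [CommMonoid M] {p k : ℕ}
    (hunits : ∀ u : Mˣ, u ^ k = 1) (hpk : p.Coprime k) {b g : M} (h : Associated (g ^ p) b) :
    ∃ c, c ^ p = b := by
  obtain ⟨u, rfl⟩ := h
  obtain ⟨j, hj⟩ := exists_pow_eq_self_of_coprime
    (hpk.coprime_dvd_right (orderOf_dvd_of_pow_eq_one (hunits u)))
  refine ⟨g * ↑(u ^ j), ?_⟩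
  rw [mul_pow, ← Units.val_pow_eq_pow_val, pow_right_comm, hj]

theorem exists_odd_pow_eq_of_sq_eq {R : Type*} [CommRing R] [IsDomain R] [IsIntegrallyClosed R]
    {a c g : R} {m : ℕ} (h : a ^ 2 = c * g ^ (2 * m + 1)) :
    ∃ r, r ^ (2 * m + 1) = c ^ m * a := by
  rcases eq_or_ne g 0 with rfl | hg
  · have ha : a = 0 := by simpa using h
    exact ⟨0, by simp [ha]⟩
  have hdvd : g ^ m ∣ a := by
    rw [← IsIntegrallyClosed.pow_dvd_pow_iff two_ne_zero, h]
    exact ⟨c * g, by ring⟩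
  obtain ⟨r, rfl⟩ := hdvd
  have hr : r ^ 2 = c * g :=
    mul_left_cancel₀ (pow_ne_zero 2 (pow_ne_zero m hg)) (by linear_combination h)
  exact ⟨r, by rw [pow_succ, pow_mul, hr]; ring⟩

theorem isCoprime_of_isCoprime_add_mul {R : Type*} [CommRing R] {a b : R}
    (h : IsCoprime (a + b) (a * b)) : IsCoprime a b := by
  obtain ⟨u, w, huw⟩ := h
  exact ⟨u + w * b, u, by linear_combination huw⟩

/-! ### Powers and units in `ℤ√D` -/

section Zsqrtd

variable {D : ℤ}

theorem re_pow_eq_zero_of_odd (v : ℤ) {n : ℕ} (hn : Odd n) :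
    ((⟨0, v⟩ : ℤ√D) ^ n).re = 0 := by
  obtain ⟨m, rfl⟩ := hn
  have hsq : (⟨0, v⟩ : ℤ√D) ^ 2 = ((D * v ^ 2 : ℤ) : ℤ√D) := by
    ext <;> simp [pow_two, mul_assoc]
  rw [pow_succ, pow_mul, hsq, ← Int.cast_pow, Zsqrtd.re_smul, mul_zero]

theorem re_dvd_re_pow_of_odd (z : ℤ√D) {n : ℕ} (hn : Odd n) : z.re ∣ (z ^ n).re := by
  have hdvd := sub_dvd_pow_sub_pow z ⟨0, z.im⟩ n
  have hsub : z - ⟨0, z.im⟩ = (z.re : ℤ√D) := by ext <;> simp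
  rw [hsub, Zsqrtd.intCast_dvd, Zsqrtd.re_sub, re_pow_eq_zero_of_odd _ hn, sub_zero] at hdvd
  exact hdvd.1

theorem prime_dvd_re_pow_sub_pow_re (z : ℤ√D) {p : ℕ} (hp : p.Prime) (hodd : Odd p) :
    (p : ℤ) ∣ (z ^ p).re - z.re ^ p := by
  obtain ⟨r, hr⟩ := exists_add_pow_prime_eq hp (z.re : ℤ√D) ⟨0, z.im⟩
  have hz : (z.re : ℤ√D) + ⟨0, z.im⟩ = z := by ext <;> simp
  have hdvd : ((p : ℤ) : ℤ√D) ∣ z ^ p - ((z.re ^ p : ℤ) : ℤ√D) - ⟨0, z.im⟩ ^ p :=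
    ⟨z.re * ⟨0, z.im⟩ * r, by rw [hz] at hr; push_cast; linear_combination hr⟩
  rw [Zsqrtd.intCast_dvd, Zsqrtd.re_sub, Zsqrtd.re_sub, re_pow_eq_zero_of_odd _ hodd,
    sub_zero, Zsqrtd.re_intCast] at hdvd
  exact hdvd.1

theorem norm_zsqrtd_pow (z : ℤ√D) (n : ℕ) : (z ^ n).norm = z.norm ^ n :=
  map_pow Zsqrtd.normMonoidHom z n

theorem unit_pow_four_eq_one (hD : D < 0) (u : (ℤ√D)ˣ) : u ^ 4 = 1 := by
  obtain ⟨⟨a, b⟩, hu⟩ : ∃ z : ℤ√D, (u : ℤ√D) = z := ⟨u, rfl⟩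
  have hnorm : a * a - D * b * b = 1 := by
    simpa only [hu, Zsqrtd.norm_def] using (Zsqrtd.norm_eq_one_iff' hD.le (u : ℤ√D)).mpr u.isUnit
  have ha : |a| ≤ 1 := abs_le_one_iff_mul_self_le_one.mpr (by nlinarith [sq_nonneg b])
  have hsq : (u : ℤ√D) ^ 2 = 1 ∨ (u : ℤ√D) ^ 2 = -1 := by
    have hre : D * b * b = a * a - 1 := by linear_combination -hnorm
    rcases Int.abs_le_one_iff.mp ha with rfl | rfl | rfl
    · right
      ext <;> simp [hu, pow_two, hre]
    all_goals
      left
      have hb : b = 0 := by simpa [hD.ne] using hre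
      ext <;> simp [hu, pow_two, hb]
  ext : 1
  rw [Units.val_pow_eq_pow_val, show 4 = 2 * 2 from rfl, pow_mul]
  rcases hsq with h | h <;> simp [h]

theorem odd_re_of_norm_eq {N : ℤ} {z : ℤ√D} (hD : D % 4 = 3) (hN : Odd N) (hz : z.norm = 2 * N) :
    Odd z.re := by
  obtain ⟨c, rfl⟩ := hN
  rw [Zsqrtd.norm_def] at hz
  by_contra hre
  obtain ⟨x, hx⟩ := Int.not_odd_iff_even.mp hre
  have hD' : D = 4 * (D / 4) + 3 := by omega
  rcases Int.even_or_odd' z.im with ⟨y, hy | hy⟩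
  all_goals
    rw [hx, hy, hD'] at hz
    ring_nf at hz
    omega

end Zsqrtd

/-! ### Odd powers of elements of real part one -/

theorem two_pow_succ_mul_sq_dvd_one_add_pow_sub {R : Type*} [CommRing R] (t z : R) (a b : ℕ) :
    2 ^ (a + 1) * t ^ 2 ∣
      (1 + 2 * t * z) ^ (2 ^ a * b) - (1 + 2 ^ a * b * (2 * t * z)) := by
  induction a with
  | zero =>
    simp only [pow_zero, one_mul, zero_add, pow_one]
    induction b with
    | zero => simp
    | succ b ih =>
      obtain ⟨y, hy⟩ := ih
      refine ⟨y * (1 + 2 * t * z) + 2 * b * z ^ 2, ?_⟩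
      push_cast
      linear_combination (1 + 2 * t * z) * hy
  | succ a ih =>
    obtain ⟨y, hy⟩ := ih
    refine ⟨y + 2 ^ a * b ^ 2 * z ^ 2 + 2 ^ a * b * y * (2 * t * z) + 2 ^ a * t ^ 2 * y ^ 2, ?_⟩
    rw [show 2 ^ (a + 1) * b = 2 ^ a * b * 2 by ring, pow_mul, sub_eq_iff_eq_add.mp hy]
    ring

/-- Half of the square of `α = 1 + v√D`, when `α` has norm `2N`; see `mk_one_sq`. -/
def halfSq (D N v : ℤ) : ℤ√D := ⟨1 - N, v⟩

/-- The integer `2⁻ᵐ Re (α ^ (2m + 1))` for `α = 1 + v√D` of norm `2N`; see `re_mk_one_pow`. It is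
defined as the real part of `α * (α² / 2) ^ m`, which avoids the division. -/
def normalizedRe (D N v : ℤ) (m : ℕ) : ℤ := ((⟨1, v⟩ : ℤ√D) * halfSq D N v ^ m).re

section PowersOfMkOne

variable {D N v : ℤ}

theorem mk_one_sq (h : 1 - D * v ^ 2 = 2 * N) : (⟨1, v⟩ : ℤ√D) ^ 2 = 2 * halfSq D N v := by
  rw [halfSq, pow_two]
  ext
  · simp only [Zsqrtd.re_mul, Zsqrtd.re_ofNat, Zsqrtd.im_ofNat, Nat.cast_ofNat]
    linear_combination -h
  · simp only [Zsqrtd.im_mul, Zsqrtd.re_ofNat, Zsqrtd.im_ofNat, Nat.cast_ofNat]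
    ring

theorem re_mk_one_pow (h : 1 - D * v ^ 2 = 2 * N) (m : ℕ) :
    ((⟨1, v⟩ : ℤ√D) ^ (2 * m + 1)).re = 2 ^ m * normalizedRe D N v m := by
  have hcast : (2 : ℤ√D) ^ m = ((2 ^ m : ℤ) : ℤ√D) := by push_cast; rfl
  rw [pow_succ', pow_mul, mk_one_sq h, mul_pow, mul_left_comm, hcast, Zsqrtd.re_smul, normalizedRe]

variable {t : ℤ}

theorem halfSq_sq (h : 1 - D * v ^ 2 = 2 * (2 * t + 1)) :
    halfSq D (2 * t + 1) v ^ 2 = -(1 + 2 * ((2 * t : ℤ) : ℤ√D) * ⟨1 - t, v⟩) := by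
  have hcast : 2 * ((2 * t : ℤ) : ℤ√D) = ((4 * t : ℤ) : ℤ√D) := by
    push_cast
    ring
  rw [halfSq, pow_two, hcast]
  ext
  · simp only [Zsqrtd.re_mul, Zsqrtd.re_neg, Zsqrtd.re_add, Zsqrtd.re_one, Zsqrtd.re_intCast,
      Zsqrtd.im_intCast]
    linear_combination -h
  · simp only [Zsqrtd.im_mul, Zsqrtd.im_neg, Zsqrtd.im_add, Zsqrtd.im_one, Zsqrtd.re_intCast,
      Zsqrtd.im_intCast]
    ring

-- The term `5 * b` makes the last factor odd when `b` is odd, so the correction cannot vanish.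
theorem normalizedRe_two_mul (h : 1 - D * v ^ 2 = 2 * (2 * t + 1)) (a b : ℕ) :
    ∃ w : ℤ, normalizedRe D (2 * t + 1) v (2 * (2 ^ a * b)) =
      (-1) ^ (2 ^ a * b) * (1 + 2 ^ (a + 2) * t ^ 2 * (2 * w - 5 * b)) := by
  obtain ⟨y, hy⟩ := two_pow_succ_mul_sq_dvd_one_add_pow_sub ((2 * t : ℤ) : ℤ√D) ⟨1 - t, v⟩ a b
  have hre : ((⟨1, v⟩ : ℤ√D) * ⟨1 - t, v⟩).re = -5 * t := by
    rw [Zsqrtd.re_mul]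
    linear_combination -h
  refine ⟨((⟨1, v⟩ : ℤ√D) * y).re, ?_⟩
  have hexpand : (⟨1, v⟩ : ℤ√D) * halfSq D (2 * t + 1) v ^ (2 * (2 ^ a * b)) =
      (((-1) ^ (2 ^ a * b) : ℤ) : ℤ√D) * (⟨1, v⟩ +
        ((2 ^ (a + 2) * b * t : ℤ) : ℤ√D) * (⟨1, v⟩ * ⟨1 - t, v⟩) +
        ((2 ^ (a + 3) * t ^ 2 : ℤ) : ℤ√D) * (⟨1, v⟩ * y)) := by
    rw [pow_mul, halfSq_sq h, neg_pow, sub_eq_iff_eq_add.mp hy]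
    push_cast
    ring
  simp only [normalizedRe, hexpand, Zsqrtd.re_smul, Zsqrtd.re_add, hre]
  ring

theorem normalizedRe_two_mul_ne (h : 1 - D * v ^ 2 = 2 * (2 * t + 1)) (ht : t ≠ 0) {q : ℕ}
    (hq : q ≠ 0) : normalizedRe D (2 * t + 1) v (2 * q) ≠ (-1) ^ q := by
  obtain ⟨a, b, ⟨c, rfl⟩, rfl⟩ := Nat.exists_eq_two_pow_mul_odd hq
  obtain ⟨w, hw⟩ := normalizedRe_two_mul h a (2 * c + 1)
  have hodd : 2 * w - 5 * (2 * c + 1 : ℕ) ≠ 0 := by omega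
  rw [hw, Ne, mul_eq_left₀ (pow_ne_zero _ (by norm_num)), add_eq_left]
  exact mul_ne_zero (by positivity) hodd

theorem normalizedRe_two_mul_add_one (h : 1 - D * v ^ 2 = 2 * (2 * t + 1)) (q : ℕ) :
    ∃ w : ℤ, normalizedRe D (2 * t + 1) v (2 * q + 1) =
      (-1) ^ (q + 1) * (1 + 2 * t * (2 * w + 3)) := by
  obtain ⟨y, hy⟩ : ((4 * t : ℤ) : ℤ√D) ∣ (-halfSq D (2 * t + 1) v ^ 2) ^ q - 1 ^ q :=
    dvd_trans ⟨⟨1 - t, v⟩, by rw [halfSq_sq h]; push_cast; ring⟩ (sub_dvd_pow_sub_pow _ _ q)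
  have hre : ((⟨1, v⟩ : ℤ√D) * halfSq D (2 * t + 1) v).re = -(1 + 6 * t) := by
    rw [halfSq, Zsqrtd.re_mul]
    linear_combination -h
  refine ⟨-((⟨1, v⟩ : ℤ√D) * halfSq D (2 * t + 1) v * y).re, ?_⟩
  have hexpand : (⟨1, v⟩ : ℤ√D) * halfSq D (2 * t + 1) v ^ (2 * q + 1) =
      (((-1) ^ q : ℤ) : ℤ√D) * (⟨1, v⟩ * halfSq D (2 * t + 1) v +
        ((4 * t : ℤ) : ℤ√D) * (⟨1, v⟩ * halfSq D (2 * t + 1) v * y)) := by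
    rw [pow_succ, pow_mul, ← neg_neg (halfSq D (2 * t + 1) v ^ 2), neg_pow,
      sub_eq_iff_eq_add.mp hy, one_pow]
    push_cast
    ring
  simp only [normalizedRe, hexpand, Zsqrtd.re_smul, Zsqrtd.re_add, hre]
  ring

theorem normalizedRe_two_mul_add_one_ne (h : 1 - D * v ^ 2 = 2 * (2 * t + 1)) (ht : t ≠ 0)
    (q : ℕ) : normalizedRe D (2 * t + 1) v (2 * q + 1) ≠ (-1) ^ (q + 1) := by
  obtain ⟨w, hw⟩ := normalizedRe_two_mul_add_one h q
  have hodd : 2 * w + 3 ≠ 0 := by omega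
  rw [hw, Ne, mul_eq_left₀ (pow_ne_zero _ (by norm_num)), add_eq_left]
  exact mul_ne_zero (by positivity) hodd

open ZMod

theorem χ₈_four_mul_add_one (q : ℕ) : χ₈ (4 * q + 1 : ℕ) = (-1) ^ q := by
  rw [χ₈_nat_eq_if_mod_eight]
  rcases q.even_or_odd' with ⟨r, rfl | rfl⟩
  · rw [if_neg (by lia), if_pos (by lia), (even_two_mul r).neg_one_pow]
  · rw [if_neg (by lia), if_neg (by lia), (odd_two_mul_add_one r).neg_one_pow]

theorem χ₈_four_mul_add_three (q : ℕ) : χ₈ (4 * q + 3 : ℕ) = (-1) ^ (q + 1) := by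
  rw [χ₈_nat_eq_if_mod_eight]
  rcases q.even_or_odd' with ⟨r, rfl | rfl⟩
  · rw [if_neg (by lia), if_neg (by lia), (odd_two_mul_add_one r).neg_one_pow]
  · rw [if_neg (by lia), if_pos (by lia), Even.neg_one_pow ⟨r + 1, by ring⟩]

theorem normalizedRe_ne_χ₈ (h : 1 - D * v ^ 2 = 2 * (2 * t + 1)) (ht : t ≠ 0) {m : ℕ}
    (hm : m ≠ 0) : normalizedRe D (2 * t + 1) v m ≠ χ₈ (2 * m + 1 : ℕ) := by
  rcases m.even_or_odd' with ⟨q, rfl | rfl⟩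
  · rw [show 2 * (2 * q) + 1 = 4 * q + 1 by ring, χ₈_four_mul_add_one]
    exact normalizedRe_two_mul_ne h ht (by simpa using hm)
  · rw [show 2 * (2 * q + 1) + 1 = 4 * q + 3 by ring, χ₈_four_mul_add_three]
    exact normalizedRe_two_mul_add_one_ne h ht q

theorem eq_χ₈_of_prime_dvd_two_pow_mul_sub_one {m : ℕ} {x : ℤ} (hp : (2 * m + 1).Prime)
    (hx : |x| = 1) (hdvd : ((2 * m + 1 : ℕ) : ℤ) ∣ 2 ^ m * x - 1) : x = χ₈ (2 * m + 1 : ℕ) := by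
  have : Fact (2 * m + 1).Prime := ⟨hp⟩
  have hp2 : 2 < 2 * m + 1 := by have := hp.two_le; lia
  have hlegendre : ((χ₈ (2 * m + 1 : ℕ) : ℤ) : ZMod (2 * m + 1)) = 2 ^ m := by
    rw [← legendreSym.at_two hp2.ne', legendreSym.eq_pow, show (2 * m + 1) / 2 = m by lia]
    norm_cast
  have hxmul : (2 : ZMod (2 * m + 1)) ^ m * x = 1 := by
    rw [← sub_eq_zero]
    exact_mod_cast (intCast_zmod_eq_zero_iff_dvd _ _).mpr hdvd
  have hcast : (x : ZMod (2 * m + 1)) = (χ₈ (2 * m + 1 : ℕ) : ℤ) := by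
    rw [hlegendre]
    rcases eq_or_eq_neg_of_abs_eq hx with rfl | rfl
    · simpa using hxmul.symm
    · push_cast at hxmul ⊢
      linear_combination hxmul
  have hchar : ringChar (ZMod (2 * m + 1)) ≠ 2 := by rw [ringChar_zmod_n]; exact hp2.ne'
  refine Int.cast_injOn_of_ringChar_ne_two hchar ?_ (isQuadratic_χ₈ _) hcast
  exact .inr (eq_or_eq_neg_of_abs_eq hx)

theorem abs_normalizedRe_ne_one (h : 1 - D * v ^ 2 = 2 * (2 * t + 1)) (ht : t ≠ 0) {m : ℕ}
    (hp : (2 * m + 1).Prime) : |normalizedRe D (2 * t + 1) v m| ≠ 1 := by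
  intro habs
  have hm : m ≠ 0 := by rintro rfl; exact Nat.not_prime_one hp
  have hdvd := prime_dvd_re_pow_sub_pow_re (⟨1, v⟩ : ℤ√D) hp (odd_two_mul_add_one m)
  rw [re_mk_one_pow h, one_pow] at hdvd
  exact normalizedRe_ne_χ₈ h ht hm (eq_χ₈_of_prime_dvd_two_pow_mul_sub_one hp habs hdvd)

theorem abs_re_pow_prime_ne_two_pow {z : ℤ√D} {m : ℕ} (hD : D % 4 = 3)
    (hz : z.norm = 2 * (2 * t + 1)) (ht : t ≠ 0) (hp : (2 * m + 1).Prime) :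
    |(z ^ (2 * m + 1)).re| ≠ 2 ^ m := by
  intro habs
  have hre : |z.re| = 1 := by
    have hdvd : z.re ∣ 2 ^ m := by
      rw [← habs, dvd_abs]
      exact re_dvd_re_pow_of_odd z (odd_two_mul_add_one m)
    have hcop : IsCoprime z.re (2 ^ m) :=
      (Int.isCoprime_two_right.mpr (odd_re_of_norm_eq hD (odd_two_mul_add_one t) hz)).pow_right
    exact Int.isUnit_iff_abs_eq.mp (hcop.isUnit_of_dvd' dvd_rfl hdvd)
  wlog hone : z.re = 1 generalizing z
  · have hneg := (eq_or_eq_neg_of_abs_eq hre).resolve_left hone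
    refine this (z := -z) ?_ ?_ ?_ ?_
    · rwa [Zsqrtd.norm_neg]
    · rwa [(odd_two_mul_add_one m).neg_pow, Zsqrtd.re_neg, abs_neg]
    · rwa [Zsqrtd.re_neg, abs_neg]
    · rw [Zsqrtd.re_neg, hneg, neg_neg]
  obtain ⟨x, v⟩ := z
  obtain rfl : x = 1 := hone
  have h : 1 - D * v ^ 2 = 2 * (2 * t + 1) := by
    rw [← hz, Zsqrtd.norm_def]
    ring
  rw [re_mk_one_pow h, abs_mul, abs_of_pos (by positivity), mul_eq_left₀ (by positivity)] at habs
  exact abs_normalizedRe_ne_one h ht hp habs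

theorem emod_four_eq_three_of_one_sub_mul_sq_eq (hN : Odd N) (h : 1 - D * v ^ 2 = 2 * N) :
    D % 4 = 3 := by
  obtain ⟨c, rfl⟩ := hN
  rcases Int.even_or_odd' v with ⟨x, rfl | rfl⟩
  · have : 1 = 2 * (2 * (D * x ^ 2) + (2 * c + 1)) := by linear_combination h
    omega
  · have : D = 4 * (-D * x ^ 2 - D * x - c - 1) + 3 := by linear_combination -h
    omega

theorem norm_mk_one (h : 1 - D * v ^ 2 = 2 * N) : (⟨1, v⟩ : ℤ√D).norm = 2 * N := by
  rw [Zsqrtd.norm_def]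
  linear_combination h

theorem pow_prime_ne_two_pow_mul_mk_one {m : ℕ} (hN : Odd N) (hN1 : N ≠ 1)
    (h : 1 - D * v ^ 2 = 2 * N) (hp : (2 * m + 1).Prime) (δ : ℤ√D) :
    δ ^ (2 * m + 1) ≠ 2 ^ m * ⟨1, v⟩ := by
  intro hδ
  have hcast : (2 : ℤ√D) ^ m = ((2 ^ m : ℤ) : ℤ√D) := by push_cast; rfl
  rw [hcast] at hδ
  have hnorm : δ.norm ^ (2 * m + 1) = 2 ^ (2 * m + 1) * N := by
    rw [← norm_zsqrtd_pow, hδ, Zsqrtd.norm_mul, Zsqrtd.norm_intCast, norm_mk_one h]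
    ring
  obtain ⟨K, hK⟩ : 2 ∣ δ.norm := (Int.pow_dvd_pow_iff (by lia)).mp (Dvd.intro _ hnorm.symm)
  have hKN : K ^ (2 * m + 1) = N := by
    rw [hK, mul_pow] at hnorm
    exact mul_left_cancel₀ (by positivity) hnorm
  obtain ⟨t, rfl⟩ : Odd K := by
    rw [← hKN] at hN
    exact (Int.odd_pow.mp hN).resolve_right (by lia)
  have ht : t ≠ 0 := by
    rintro rfl
    exact hN1 (by simp [← hKN])
  refine abs_re_pow_prime_ne_two_pow (emod_four_eq_three_of_one_sub_mul_sq_eq hN h) hK ht hp ?_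
  rw [hδ, Zsqrtd.re_smul, mul_one, abs_of_pos (by positivity)]

end PowersOfMkOne

/-! ### The class number of `ℤ√D` -/

section ClassGroup

variable {D N v : ℤ}

theorem halfSq_mul_star (h : 1 - D * v ^ 2 = 2 * N) :
    halfSq D N v * star (halfSq D N v) = ((N ^ 2 : ℤ) : ℤ√D) := by
  rw [← Zsqrtd.norm_eq_mul_conj, Zsqrtd.norm_def, halfSq]
  congr 1
  linear_combination h

theorem isCoprime_halfSq_star (h : 1 - D * v ^ 2 = 2 * N) (hN : Odd N) :
    IsCoprime (halfSq D N v) (star (halfSq D N v)) := by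
  have hadd : halfSq D N v + star (halfSq D N v) = ((2 * (1 - N) : ℤ) : ℤ√D) := by
    ext <;> simp [halfSq, two_mul]
  have hcop : IsCoprime (2 * (1 - N)) (N ^ 2) :=
    (IsCoprime.mul_left (Int.isCoprime_two_left.mpr hN) ⟨1, 1, by ring⟩).pow_right
  apply isCoprime_of_isCoprime_add_mul
  rw [hadd, halfSq_mul_star h]
  exact hcop.map (Int.castRingHom (ℤ√D))

theorem not_associated_halfSq_pow [IsDomain (ℤ√D)] [IsIntegrallyClosed (ℤ√D)] {p : ℕ}
    (hD : D < 0) (hN : Odd N) (hN1 : N ≠ 1) (h : 1 - D * v ^ 2 = 2 * N)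
    (hp : p.Prime) (hodd : Odd p) (g : ℤ√D) : ¬Associated (halfSq D N v) (g ^ p) := by
  intro hassoc
  have hp4 : p.Coprime 4 := Nat.Coprime.pow_right 2 (Nat.coprime_two_right.mpr hodd)
  obtain ⟨γ, hγ⟩ := exists_pow_eq_of_associated_pow (unit_pow_four_eq_one hD) hp4 hassoc.symm
  obtain ⟨m, rfl⟩ := hodd
  obtain ⟨δ, hδ⟩ := exists_odd_pow_eq_of_sq_eq (hγ ▸ mk_one_sq h)
  exact pow_prime_ne_two_pow_mul_mk_one hN hN1 h hp δ hδ

theorem dvd_card_classGroup_zsqrtd [IsDedekindDomain (ℤ√D)] {k : ℤ} {n : ℕ} (hD : D < 0)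
    (hn : Odd n) (hk : Odd k) (hk1 : k ≠ 1) (h : 1 - D * v ^ 2 = 2 * k ^ n) :
    n ∣ Nat.card (ClassGroup (ℤ√D)) := by
  have hN : Odd (k ^ n) := hk.pow
  have hN1 : k ^ n ≠ 1 := by
    rwa [Ne, ← one_pow n, hn.pow_inj]
  have hmul : halfSq D (k ^ n) v * star (halfSq D (k ^ n) v) = ((k ^ 2 : ℤ) : ℤ√D) ^ n := by
    rw [halfSq_mul_star h]
    push_cast
    ring
  refine dvd_card_classGroup_of_mul_eq_pow ?_ hn.pos.ne' (isCoprime_halfSq_star h hN) hmul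
    fun p hp hpn ↦ not_associated_halfSq_pow hD hN hN1 h hp (hn.of_dvd_nat hpn)
  intro hzero
  have : 1 - k ^ n = 0 := congrArg Zsqrtd.re hzero
  lia

end ClassGroup

/-! ### The ring of integers of `ℚ(√D)` -/

theorem exists_int_eq_of_isIntegral {q : ℚ} (hq : IsIntegral ℤ q) : ∃ z : ℤ, q = z :=
  (IsIntegrallyClosed.isIntegral_iff.mp hq).imp fun _ hz ↦ by simpa using hz.symm

theorem exists_int_eq_of_squarefree_mul_sq_eq {D M : ℤ} {q : ℚ} (hD : Squarefree D)
    (h : D * q ^ 2 = M) : ∃ z : ℤ, q = z := by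
  have hsq : (D * q) ^ 2 = ((D * M : ℤ) : ℚ) := by
    push_cast
    linear_combination D * h
  obtain ⟨C, hC⟩ : ∃ C : ℤ, D * q = C := by
    refine exists_int_eq_of_isIntegral (.of_pow two_pos ?_)
    rw [hsq]
    exact isIntegral_algebraMap (x := D * M)
  obtain ⟨z, rfl⟩ : D ∣ C := by
    rw [← hD.dvd_pow_iff_dvd two_ne_zero]
    exact ⟨M, by rw [hC] at hsq; exact_mod_cast hsq⟩
  refine ⟨z, mul_left_cancel₀ (Int.cast_ne_zero.mpr hD.ne_zero) ?_⟩
  rw [hC, Int.cast_mul]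

theorem even_and_even_of_sq_sub_mul_sq_eq {D A B M : ℤ} (hD0 : D % 4 ≠ 0) (hD1 : D % 4 ≠ 1)
    (h : A ^ 2 - D * B ^ 2 = 4 * M) : Even A ∧ Even B := by
  have hmod : (A ^ 2 - D % 4 * B ^ 2) % 4 = 0 := by
    rw [Int.sub_emod, Int.mul_emod, Int.emod_emod_of_dvd _ dvd_rfl, ← Int.mul_emod,
      ← Int.sub_emod, h, Int.mul_emod_right]
  have hr : D % 4 = 2 ∨ D % 4 = 3 := by omega
  rcases Int.even_or_odd' A with ⟨x, rfl | rfl⟩ <;> rcases Int.even_or_odd' B with ⟨y, rfl | rfl⟩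
  · exact ⟨even_two_mul x, even_two_mul y⟩
  all_goals
    rcases hr with hr | hr <;> rw [hr] at hmod <;> ring_nf at hmod <;> omega

section QuadraticAlgebra

open QuadraticAlgebra

variable {R : Type*} [CommRing R] {a b : R} {x : QuadraticAlgebra R a b}

theorem isIntegral_star (hx : IsIntegral ℤ x) : IsIntegral ℤ (star x) :=
  hx.map (starRingEnd _).toIntAlgHom

theorem isIntegral_trace (hx : IsIntegral ℤ x) : IsIntegral ℤ x.trace := by
  rw [← isIntegral_algebraMap_iff (algebraMap_injective (a := a) (b := b)),
    algebraMap_trace_eq_add_star]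
  exact hx.add (isIntegral_star hx)

theorem isIntegral_norm (hx : IsIntegral ℤ x) : IsIntegral ℤ x.norm := by
  rw [← isIntegral_algebraMap_iff (algebraMap_injective (a := a) (b := b)),
    algebraMap_norm_eq_mul_star]
  exact hx.mul (isIntegral_star hx)

theorem nonempty_quadraticAlgebra_algEquiv_adjoin {K L : Type*} [Field K] [Field L] [Algebra K L]
    {a s : K} [Fact (∀ x : K, x ^ 2 ≠ a + 0 * x)] {r : L} (hs : s ≠ 0)
    (hr : r ^ 2 = algebraMap K L (a * s ^ 2)) : Nonempty (QuadraticAlgebra K a 0 ≃ₐ[K] K⟮r⟯) := by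
  have hsq : (s⁻¹ • r) * (s⁻¹ • r) = a • (1 : L) + (0 : K) • (s⁻¹ • r) := by
    rw [zero_smul, add_zero, smul_mul_smul_comm, ← pow_two r, hr, Algebra.algebraMap_eq_smul_one,
      smul_smul]
    congr 1
    field_simp
  let φ : QuadraticAlgebra K a 0 →ₐ[K] L := QuadraticAlgebra.lift ⟨s⁻¹ • r, hsq⟩
  have hφ (x : QuadraticAlgebra K a 0) : φ x = x.re • 1 + x.im • s⁻¹ • r := rfl
  have hrange : φ.fieldRange = K⟮r⟯ := by
    refine le_antisymm ?_ (adjoin_simple_le_iff.mpr (φ.mem_fieldRange.mpr ⟨⟨0, s⟩, ?_⟩))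
    · intro y hy
      obtain ⟨x, rfl⟩ := φ.mem_fieldRange.mp hy
      rw [hφ]
      exact add_mem (K⟮r⟯.smul_mem (one_mem _))
        (K⟮r⟯.smul_mem (K⟮r⟯.smul_mem (mem_adjoin_simple_self K r)))
    · rw [hφ, zero_smul, zero_add, smul_inv_smul₀ hs]
  exact ⟨φ.equivFieldRange.trans (IntermediateField.equivOfEq hrange)⟩

end QuadraticAlgebra

section RingOfIntegers

open QuadraticAlgebra

variable {D : ℤ}

/-- The embedding of `ℤ√D` into `ℚ(√D)`, with the latter modelled as `QuadraticAlgebra ℚ D 0`,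
the algebra obtained from `ℚ` by adjoining a formal root `ω` of `X² - D`. -/
noncomputable def zsqrtdToQuadraticAlgebra (D : ℤ) : ℤ√D →+* QuadraticAlgebra ℚ (D : ℚ) 0 :=
  Zsqrtd.lift ⟨ω, by simp [omega_mul_omega_eq_add, Algebra.smul_def]⟩

theorem zsqrtdToQuadraticAlgebra_apply (z : ℤ√D) :
    zsqrtdToQuadraticAlgebra D z = ⟨z.re, z.im⟩ := by
  rw [zsqrtdToQuadraticAlgebra, Zsqrtd.lift_apply_apply]
  ext <;> simp

theorem isIntegral_zsqrtd (z : ℤ√D) : IsIntegral ℤ z := by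
  have hsqrtd : IsIntegral ℤ (Zsqrtd.sqrtd : ℤ√D) := by
    refine .of_pow two_pos ?_
    rw [pow_two, Zsqrtd.dmuld]
    exact isIntegral_algebraMap (x := D)
  rw [show z = ⟨z.re, z.im⟩ from rfl, Zsqrtd.decompose]
  exact (isIntegral_algebraMap (x := z.re)).add (hsqrtd.mul (isIntegral_algebraMap (x := z.im)))

theorem exists_zsqrtdToQuadraticAlgebra_eq (hD : Squarefree D) (hD1 : D % 4 ≠ 1)
    {x : QuadraticAlgebra ℚ (D : ℚ) 0} (hx : IsIntegral ℤ x) :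
    ∃ z, zsqrtdToQuadraticAlgebra D z = x := by
  have hD0 : D % 4 ≠ 0 := fun h ↦ by
    have := hD 2 (Int.dvd_of_emod_eq_zero h)
    norm_num [Int.isUnit_iff] at this
  obtain ⟨A, hA⟩ := exists_int_eq_of_isIntegral (isIntegral_trace hx)
  obtain ⟨M, hM⟩ := exists_int_eq_of_isIntegral (isIntegral_norm hx)
  rw [trace_def, zero_mul, add_zero] at hA
  rw [norm_def, zero_mul, zero_mul, add_zero] at hM
  obtain ⟨B, hB⟩ : ∃ B : ℤ, 2 * x.im = B :=
    exists_int_eq_of_squarefree_mul_sq_eq (M := A ^ 2 - 4 * M) hD (by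
      push_cast
      linear_combination (2 * x.re + A) * hA - 4 * hM)
  have hAB : A ^ 2 - D * B ^ 2 = 4 * M := by
    have : (A : ℚ) ^ 2 - D * B ^ 2 = 4 * M := by
      rw [← hA, ← hB, ← hM]
      ring
    exact_mod_cast this
  obtain ⟨⟨r, rfl⟩, ⟨i, rfl⟩⟩ := even_and_even_of_sq_sub_mul_sq_eq hD0 hD1 hAB
  refine ⟨⟨r, i⟩, ?_⟩
  rw [zsqrtdToQuadraticAlgebra_apply]
  push_cast at hA hB
  ext
  · linarith
  · linarith

/-- The algebra structure exhibiting `ℤ√D` as the integral closure of `ℤ` in `ℚ(√D)`; see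
`isIntegralClosure_zsqrtd`. -/
noncomputable instance algebraZsqrtdQuadraticAlgebra :
    Algebra (ℤ√D) (QuadraticAlgebra ℚ (D : ℚ) 0) :=
  (zsqrtdToQuadraticAlgebra D).toAlgebra

theorem isIntegralClosure_zsqrtd (hD : Squarefree D) (hD1 : D % 4 ≠ 1) :
    IsIntegralClosure (ℤ√D) ℤ (QuadraticAlgebra ℚ (D : ℚ) 0) where
  algebraMap_injective z w h := by
    simp only [RingHom.algebraMap_toAlgebra, zsqrtdToQuadraticAlgebra_apply] at h
    obtain ⟨hre, him⟩ := QuadraticAlgebra.mk.inj h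
    exact Zsqrtd.ext (Int.cast_injective hre) (Int.cast_injective him)
  isIntegral_iff := by
    refine ⟨exists_zsqrtdToQuadraticAlgebra_eq hD hD1, ?_⟩
    rintro ⟨z, rfl⟩
    exact (isIntegral_zsqrtd z).map (algebraMap (ℤ√D) (QuadraticAlgebra ℚ (D : ℚ) 0)).toIntAlgHom

theorem fact_rat_sq_ne_of_squarefree (hD : Squarefree D) (hD1 : D ≠ 1) :
    Fact (∀ r : ℚ, r ^ 2 ≠ (D : ℚ) + 0 * r) where
  out r h := by
    obtain ⟨c, rfl⟩ : IsSquare D := Rat.isSquare_intCast_iff.mp ⟨r, by linear_combination -h⟩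
    exact hD1 (Int.isUnit_mul_self (hD c dvd_rfl))

theorem isDedekindDomain_zsqrtd (hD : Squarefree D) (hD1 : D % 4 ≠ 1) :
    IsDedekindDomain (ℤ√D) := by
  have := fact_rat_sq_ne_of_squarefree hD (ne_of_apply_ne (· % 4) hD1)
  have := isIntegralClosure_zsqrtd hD hD1
  have := (IsIntegralClosure.algebraMap_injective (ℤ√D) ℤ
    (QuadraticAlgebra ℚ (D : ℚ) 0)).isDomain
  exact IsIntegralClosure.isDedekindDomain ℤ ℚ (QuadraticAlgebra ℚ (D : ℚ) 0) (ℤ√D)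

theorem quadClassNumber_mul_sq [IsDomain (ℤ√D)] {s : ℤ} (hD : Squarefree D) (hD1 : D % 4 ≠ 1)
    (hs : s ≠ 0) : quadClassNumber (D * s ^ 2) = Nat.card (ClassGroup (ℤ√D)) := by
  have := fact_rat_sq_ne_of_squarefree hD (ne_of_apply_ne (· % 4) hD1)
  have := isIntegralClosure_zsqrtd hD hD1
  have hsq : (((D * s ^ 2 : ℤ) : ℂ) ^ ((1 : ℂ) / 2)) ^ 2 = algebraMap ℚ ℂ (D * s ^ 2) := by simp
  obtain ⟨e⟩ := nonempty_quadraticAlgebra_algEquiv_adjoin (Int.cast_ne_zero.mpr hs) hsq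
  exact Nat.card_congr (ClassGroup.mulEquiv
    ((RingOfIntegers.mapRingEquiv e.symm.toRingEquiv).trans (RingOfIntegers.equiv (ℤ√D)))).toEquiv

end RingOfIntegers

theorem stmt_0 (n k : ℕ) (hn : 3 ≤ n) (hno : Odd n) (hk : 3 ≤ k) (hko : Odd k)
    (d s : ℤ) (hd : 0 < d) (hs : 0 < s) (hsf : Squarefree (-d))
    (heq : (1 : ℤ) - 2 * (k : ℤ) ^ n = -d * s ^ 2) :
    n ∣ quadClassNumber (1 - 2 * (k : ℤ) ^ n) := by
  have hkn : Odd ((k : ℤ) ^ n) := ((Int.odd_coe_nat k).mpr hko).pow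
  have h : 1 - -d * s ^ 2 = 2 * (k : ℤ) ^ n := by linear_combination heq
  have hd4 : -d % 4 ≠ 1 := by
    rw [emod_four_eq_three_of_one_sub_mul_sq_eq hkn h]
    norm_num
  have := isDedekindDomain_zsqrtd hsf hd4
  rw [heq, quadClassNumber_mul_sq hsf hd4 hs.ne']
  exact dvd_card_classGroup_zsqrtd (by lia) hno ((Int.odd_coe_nat k).mpr hko) (by lia) h
end

section
/- Let −d < −3 be a squarefree integer with −d ≢ 1 (mod 4), let k > 1 be an integer with gcd(k, 2d) = 1, and let x, y, z be positive integers with gcd(x, y) = 1 and x² + d·y² = 2k^z. Then there exist positive integers x₁, y₁, z₁ with gcd(x₁, y₁) = 1 such that z₁ divides z, the ratio z/z₁ is odd, x₁² + d·y₁² = 2k^{z₁}, the ideal class group of the imaginary quadratic field K = ℚ(√(−d)) contains a cyclic subgroup of order 2z₁, and in particular z₁ divides the class number h(−d) of K. -/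
open IntermediateField NumberField

/-!
For `D` squarefree with `D ≢ 1 (mod 4)` the ring of integers of `ℚ(√D)` is `ℤ√D`. Take `D = -d` and
`a = x + y√D`, of norm `2 * k ^ z`, and consider the ideals `P = (2, a)` and `B = (k, a)`. Since `k`
is coprime to the trace `2x` of `a`, one has `P * B ^ n = (2 * k ^ n, a)` for `n ≤ z`; in particular
`P * B ^ z = (a)`. Moreover `P ^ 2 = (2)`, while `P` is not principal because no element has norm
`2`. So `[B] ^ z = [P]` has order two in the class group, which forces `[B]` to have order `2 * z₁`
with `z / z₁` odd and `[B] ^ z₁ = [P]`. Hence `P * B ^ z₁` is principal; its generator has norm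
`2 * k ^ z₁` and divides `a`, so its coordinates are coprime: up to sign they are `x₁` and `y₁`.
-/

section PairIdeals

variable {R : Type*} [CommRing R] {k l m n α β c : R}

lemma span_pair_mul_span_pair_of_isCoprime_add (hdvd : m * n ∣ α * β)
    (hco : IsCoprime n (α + β)) :
    Ideal.span {m, α} * Ideal.span {n, α} = Ideal.span {m * n, α} := by
  rw [Ideal.span_pair_mul_span_pair]
  apply le_antisymm <;> rw [Ideal.span_le] <;> intro w hw
  · rcases hw with rfl | rfl | rfl | rfl
    exacts [Ideal.mem_span_pair.2 ⟨1, 0, by ring⟩, Ideal.mem_span_pair.2 ⟨0, m, by ring⟩,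
      Ideal.mem_span_pair.2 ⟨0, n, by ring⟩, Ideal.mem_span_pair.2 ⟨0, α, by ring⟩]
  · obtain ⟨c, hc⟩ := hdvd
    obtain ⟨u, v, huv⟩ := hco
    have hα : α = v * c * (m * n) + (u * (α * n) + v * (α * α)) := by
      linear_combination -α * huv + v * hc
    have hαmem : v * c * (m * n) + (u * (α * n) + v * (α * α)) ∈
        Ideal.span {m * n, m * α, α * n, α * α} := by
      refine add_mem (Ideal.mul_mem_left _ _ ?_)
        (add_mem (Ideal.mul_mem_left _ _ ?_) (Ideal.mul_mem_left _ _ ?_)) <;>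
      exact Ideal.subset_span (by simp)
    rw [← hα] at hαmem
    rcases hw with rfl | rfl
    exacts [Ideal.subset_span (by simp), hαmem]

lemma span_pair_mul_span_pair_pow (hco : IsCoprime k (α + β)) {e : ℕ}
    (hdvd : l * k ^ e ∣ α * β) :
    Ideal.span {l, α} * Ideal.span {k, α} ^ e = Ideal.span {l * k ^ e, α} := by
  induction e with
  | zero => simp
  | succ e ih =>
    rw [pow_succ, ← mul_assoc] at hdvd
    rw [pow_succ, ← mul_assoc, ih (dvd_of_mul_right_dvd hdvd),
      span_pair_mul_span_pair_of_isCoprime_add hdvd hco, pow_succ, mul_assoc]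

lemma span_pair_mul_span_pair_conj (hc : α * β = m * c)
    (htop : Ideal.span {m, α + β, c} = ⊤) :
    Ideal.span {m, α} * Ideal.span {m, β} = Ideal.span {m} := by
  rw [Ideal.span_pair_mul_span_pair]
  apply le_antisymm
  · rw [Ideal.span_le]
    rintro w (rfl | rfl | rfl | rfl) <;> rw [SetLike.mem_coe, Ideal.mem_span_singleton]
    exacts [dvd_mul_right _ _, dvd_mul_right _ _, dvd_mul_left _ _, ⟨c, hc⟩]
  · rw [← Ideal.mul_top (Ideal.span {m}), ← htop, Ideal.span_mul_span', Set.singleton_mul,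
      Ideal.span_le]
    rintro _ ⟨w, rfl | rfl | rfl, rfl⟩
    · exact Ideal.subset_span (by simp)
    · change m * (α + β) ∈ Ideal.span _
      rw [mul_add, mul_comm m α, add_comm]
      exact add_mem (Ideal.subset_span (by simp)) (Ideal.subset_span (by simp))
    · exact Ideal.subset_span (by simp [hc])

end PairIdeals

lemma exists_orderOf_eq_two_mul {G : Type*} [Monoid G] {g : G} {z : ℕ} (hne : g ^ z ≠ 1)
    (hsq : (g ^ z) ^ 2 = 1) :
    ∃ z₁ q : ℕ, z = z₁ * q ∧ Odd q ∧ orderOf g = 2 * z₁ ∧ g ^ z₁ = g ^ z := by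
  have hdvd : orderOf g ∣ 2 * z := orderOf_dvd_of_pow_eq_one (by rw [mul_comm, pow_mul, hsq])
  have hndvd : ¬ orderOf g ∣ z := fun h ↦ hne (orderOf_dvd_iff_pow_eq_one.1 h)
  have heven : 2 ∣ orderOf g := by
    by_contra h
    exact hndvd ((Nat.prime_two.coprime_iff_not_dvd.2 h).symm.dvd_of_dvd_mul_left hdvd)
  obtain ⟨z₁, hz₁⟩ := heven
  rw [hz₁] at hdvd hndvd
  obtain ⟨q, rfl⟩ := Nat.dvd_of_mul_dvd_mul_left two_pos hdvd
  have hq : Odd q := by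
    rw [← Nat.not_even_iff_odd]
    rintro ⟨j, rfl⟩
    exact hndvd ⟨j, by ring⟩
  refine ⟨z₁, q, rfl, hq, hz₁, ?_⟩
  obtain ⟨j, rfl⟩ := hq
  rw [show z₁ * (2 * j + 1) = 2 * z₁ * j + z₁ by ring, pow_add, pow_mul, ← hz₁,
    pow_orderOf_eq_one, one_pow, one_mul]

lemma isDedekindDomain_of_ringEquiv {R S : Type*} [CommRing R] [IsDedekindDomain R] [CommRing S]
    (e : R ≃+* S) : IsDedekindDomain S := by
  have : IsDomain S := e.symm.toMulEquiv.isDomain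
  have : IsNoetherianRing S := isNoetherianRing_of_ringEquiv R e
  have : Ring.DimensionLEOne S := .of_ringEquiv e.symm
  have : IsIntegrallyClosed S := .of_equiv e
  exact {}

section ClassGroup

open nonZeroDivisors

variable {R : Type*} [CommRing R] [IsDedekindDomain R] {P B : (Ideal R)⁰}

lemma mk0_mul_mk0_pow_eq_one_iff {n : ℕ} :
    ClassGroup.mk0 P * ClassGroup.mk0 B ^ n = 1 ↔
      ((P : Ideal R) * (B : Ideal R) ^ n).IsPrincipal := by
  rw [← map_pow, ← map_mul, ClassGroup.mk0_eq_one_iff (P * B ^ n).2]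
  rfl

lemma exists_orderOf_mk0_eq_two_mul {z : ℕ} (hP : ¬ (P : Ideal R).IsPrincipal)
    (hPP : ((P : Ideal R) * P).IsPrincipal)
    (hPB : ((P : Ideal R) * (B : Ideal R) ^ z).IsPrincipal) :
    ∃ z₁ q : ℕ, z = z₁ * q ∧ Odd q ∧ orderOf (ClassGroup.mk0 B) = 2 * z₁ ∧
      ((P : Ideal R) * (B : Ideal R) ^ z₁).IsPrincipal := by
  have hne : ClassGroup.mk0 P ≠ 1 := (ClassGroup.mk0_eq_one_iff P.2).not.2 hP
  have hinv : ClassGroup.mk0 P * ClassGroup.mk0 P = 1 := by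
    simpa using mk0_mul_mk0_pow_eq_one_iff (n := 1).2 (by simpa using hPP)
  have hpow : ClassGroup.mk0 B ^ z = ClassGroup.mk0 P :=
    mul_left_cancel ((mk0_mul_mk0_pow_eq_one_iff.2 hPB).trans hinv.symm)
  obtain ⟨z₁, q, hz, hq, hord, hz₁⟩ :=
    exists_orderOf_eq_two_mul (hpow ▸ hne) (by rw [hpow, sq, hinv])
  exact ⟨z₁, q, hz, hq, hord, mk0_mul_mk0_pow_eq_one_iff.1 (by rw [hz₁, hpow, hinv])⟩

end ClassGroup

section Zsqrtd

variable {D k : ℤ} {a b : ℤ√D} {n z : ℕ}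

lemma norm_ne_two_of_lt_neg_two (hD : D < -2) (b : ℤ√D) : b.norm ≠ 2 := by
  intro hb
  rw [Zsqrtd.norm_def] at hb
  have him : b.im = 0 := by
    by_contra hne
    nlinarith [sq_nonneg b.re, sq_pos_of_ne_zero hne]
  have hre : b.re * b.re = 2 := by simpa [him] using hb
  exact Int.prime_two.not_isSquare ⟨b.re, hre.symm⟩

lemma norm_eq_of_span_mul_span_star (hD : D ≤ 0) {N : ℤ} (hN : 0 ≤ N)
    (h : Ideal.span {b} * Ideal.span {star b} = Ideal.span {(N : ℤ√D)}) : b.norm = N := by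
  rw [Ideal.span_singleton_mul_span_singleton, ← Zsqrtd.norm_eq_mul_conj] at h
  have hdvd := Ideal.span_singleton_le_span_singleton.1 h.le
  have hdvd' := Ideal.span_singleton_le_span_singleton.1 h.ge
  rw [Zsqrtd.intCast_dvd_intCast] at hdvd hdvd'
  exact Int.dvd_antisymm (Zsqrtd.norm_nonneg hD b) hN hdvd' hdvd

lemma add_star_eq_intCast (a : ℤ√D) : a + star a = ((2 * a.re : ℤ) : ℤ√D) := by
  ext <;> simp [two_mul]

lemma isCoprime_re_of_dvd_norm (hkD : IsCoprime k D) (hprim : IsCoprime a.re a.im)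
    (hdvd : k ∣ a.norm) : IsCoprime k a.re := by
  rw [← gcd_isUnit_iff]
  have hgk : gcd k a.re ∣ k := gcd_dvd_left _ _
  have hgre : gcd k a.re ∣ a.re := gcd_dvd_right _ _
  have hco : IsCoprime (gcd k a.re) (D * a.im ^ 2) :=
    (hkD.of_isCoprime_of_dvd_left hgk).mul_right (hprim.of_isCoprime_of_dvd_left hgre).pow_right
  refine hco.isUnit_of_dvd' dvd_rfl ?_
  rw [show D * a.im ^ 2 = a.re * a.re - a.norm by rw [Zsqrtd.norm_def]; ring]
  exact dvd_sub (hgre.mul_right _) (hgk.trans hdvd)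

lemma re_ne_zero_of_dvd_norm (hk : ¬ IsUnit k) (hkD : IsCoprime k D)
    (hprim : IsCoprime a.re a.im) (hdvd : k ∣ a.norm) : a.re ≠ 0 := by
  intro hre
  have hco := isCoprime_re_of_dvd_norm hkD hprim hdvd
  exact hk (isCoprime_zero_right.1 (hre ▸ hco))

lemma im_ne_zero_of_even_norm (hprim : IsCoprime a.re a.im) (heven : Even a.norm) :
    a.im ≠ 0 := by
  intro him
  rw [him, isCoprime_zero_right, Int.isUnit_iff] at hprim
  rw [Zsqrtd.norm_def, him] at heven
  rcases hprim with h | h <;> simp [h] at heven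

lemma span_two_mul_pow_mul_span_star (ha : a.norm = 2 * k ^ z) (hco : IsCoprime k (2 * a.re))
    (hnz : n ≤ z) :
    Ideal.span {2 * (k : ℤ√D) ^ n, a} * Ideal.span {2 * (k : ℤ√D) ^ n, star a} =
      Ideal.span {2 * (k : ℤ√D) ^ n} := by
  apply span_pair_mul_span_pair_conj (c := (k : ℤ√D) ^ (z - n))
  · rw [← Zsqrtd.norm_eq_mul_conj, ha, mul_assoc, ← pow_add, Nat.add_sub_cancel' hnz]
    push_cast; rfl
  · obtain ⟨u, v, huv⟩ := (hco.of_mul_right_left.pow_left : IsCoprime (k ^ (z - n)) 2)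
    obtain ⟨r, s, hrs⟩ := (hco.of_mul_right_right.pow_left : IsCoprime (k ^ n) a.re)
    rw [Ideal.eq_top_iff_one, Submodule.mem_span_triple, add_star_eq_intCast]
    refine ⟨v * r, v * s, u, ?_⟩
    simp only [smul_eq_mul]
    norm_cast
    linear_combination huv + 2 * v * hrs

lemma norm_eq_of_span_two_mul_pow_eq (hD : D ≤ 0) (hk : 0 ≤ k) (ha : a.norm = 2 * k ^ z)
    (hco : IsCoprime k (2 * a.re)) (hnz : n ≤ z)
    (hb : Ideal.span {2 * (k : ℤ√D) ^ n, a} = Ideal.span {b}) : b.norm = 2 * k ^ n := by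
  have hstar : Ideal.span {2 * (k : ℤ√D) ^ n, star a} = Ideal.span {star b} := by
    simpa [Ideal.map_span, Set.image_pair, starRingEnd_apply] using
      congrArg (Ideal.map (starRingEnd (ℤ√D))) hb
  apply norm_eq_of_span_mul_span_star hD (by positivity)
  rw [← hb, ← hstar, span_two_mul_pow_mul_span_star ha hco hnz]
  push_cast; rfl

lemma span_two_mul_span_two (ha : a.norm = 2 * k ^ z) (hco : IsCoprime k (2 * a.re)) :
    Ideal.span {2, a} * Ideal.span {2, a} = Ideal.span {2} := by
  have hstar : Ideal.span {2, star a} = Ideal.span {2, a} := by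
    rw [eq_sub_of_add_eq' (add_star_eq_intCast a)]
    push_cast
    rw [sub_eq_add_neg, Ideal.span_pair_left_mul_add, Ideal.span_pair_neg]
  simpa [hstar] using span_two_mul_pow_mul_span_star ha hco z.zero_le

lemma span_two_mul_span_pow (ha : a.norm = 2 * k ^ z) (hco : IsCoprime k (2 * a.re))
    (hnz : n ≤ z) :
    Ideal.span {2, a} * Ideal.span {(k : ℤ√D), a} ^ n = Ideal.span {2 * (k : ℤ√D) ^ n, a} := by
  apply span_pair_mul_span_pair_pow (β := star a)
  · rw [add_star_eq_intCast]
    exact hco.intCast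
  · rw [← Zsqrtd.norm_eq_mul_conj, ha]
    push_cast
    exact mul_dvd_mul_left 2 (pow_dvd_pow _ hnz)

open nonZeroDivisors in
lemma span_intCast_pair_mem_nonZeroDivisors [IsDomain (ℤ√D)] {m : ℤ} (hm : m ≠ 0)
    (a : ℤ√D) :
    Ideal.span {(m : ℤ√D), a} ∈ (Ideal (ℤ√D))⁰ := by
  rw [mem_nonZeroDivisors_iff_ne_zero, Ne, Ideal.zero_eq_bot, Ideal.span_eq_bot]
  exact fun h ↦ hm (Int.cast_eq_zero.1 (h m (by simp)))

theorem exists_orderOf_eq_two_mul_of_norm_eq [IsDedekindDomain (ℤ√D)] (hD : D < -2) (hk : 0 < k)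
    (hco : IsCoprime k (2 * a.re)) (ha : a.norm = 2 * k ^ z) :
    ∃ (g : ClassGroup (ℤ√D)) (b : ℤ√D) (z₁ q : ℕ),
      z = z₁ * q ∧ Odd q ∧ b ∣ a ∧ b.norm = 2 * k ^ z₁ ∧ orderOf g = 2 * z₁ := by
  have hnorm {n : ℕ} {b : ℤ√D} (hn : n ≤ z)
      (hb : Ideal.span {2 * (k : ℤ√D) ^ n, a} = Ideal.span {b}) : b.norm = 2 * k ^ n :=
    norm_eq_of_span_two_mul_pow_eq (by omega) hk.le ha hco hn hb
  have hP : ¬ (Ideal.span {2, a}).IsPrincipal := by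
    rintro ⟨b, hb⟩
    exact norm_ne_two_of_lt_neg_two hD b (by simpa using hnorm z.zero_le (by simpa using hb))
  have hPP : (Ideal.span {2, a} * Ideal.span {2, a}).IsPrincipal :=
    ⟨2, span_two_mul_span_two ha hco⟩
  have hPB : (Ideal.span {2, a} * Ideal.span {(k : ℤ√D), a} ^ z).IsPrincipal := by
    refine ⟨a, (span_two_mul_span_pow ha hco le_rfl).trans
      (Ideal.span_pair_eq_span_right_iff_dvd.2 ⟨star a, ?_⟩)⟩
    rw [← Zsqrtd.norm_eq_mul_conj, ha]
    push_cast; rfl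
  obtain ⟨z₁, q, rfl, hq, hord, b, hb⟩ := exists_orderOf_mk0_eq_two_mul
    (P := ⟨_, span_intCast_pair_mem_nonZeroDivisors two_ne_zero a⟩)
    (B := ⟨_, span_intCast_pair_mem_nonZeroDivisors hk.ne' a⟩) hP hPP hPB
  have hle : z₁ ≤ z₁ * q := Nat.le_mul_of_pos_right _ hq.pos
  have hspan : Ideal.span {2 * (k : ℤ√D) ^ z₁, a} = Ideal.span {b} :=
    (span_two_mul_span_pow ha hco hle).symm.trans hb
  have hdvd : b ∣ a := Ideal.mem_span_singleton.1 (hspan ▸ Ideal.subset_span (by simp))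
  exact ⟨_, b, z₁, q, rfl, hq, hdvd, hnorm hle hspan, hord⟩

end Zsqrtd

section QuadraticAlgebra

variable {R : Type*} [CommRing R] {a b : R} {w : QuadraticAlgebra R a b}

lemma isIntegral_star_s7 (hw : IsIntegral ℤ w) : IsIntegral ℤ (star w) :=
  hw.map (starRingEnd (QuadraticAlgebra R a b)).toIntAlgHom

lemma isIntegral_trace_s7 (hw : IsIntegral ℤ w) : IsIntegral ℤ w.trace := by
  rw [← isIntegral_algebraMap_iff (B := QuadraticAlgebra R a b)
    QuadraticAlgebra.algebraMap_injective, QuadraticAlgebra.algebraMap_trace_eq_add_star]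
  exact hw.add (isIntegral_star_s7 hw)

lemma isIntegral_norm_s7 (hw : IsIntegral ℤ w) : IsIntegral ℤ w.norm := by
  rw [← isIntegral_algebraMap_iff (B := QuadraticAlgebra R a b)
    QuadraticAlgebra.algebraMap_injective, QuadraticAlgebra.algebraMap_norm_eq_mul_star]
  exact hw.mul (isIntegral_star_s7 hw)

end QuadraticAlgebra

section QuadraticIntegers

variable {D : ℤ}

lemma exists_intCast_eq_of_squarefree_mul_sq (hsf : Squarefree D) {q : ℚ} {N : ℤ}
    (hq : D * q ^ 2 = N) : ∃ m : ℤ, (m : ℚ) = q := by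
  have hD : (D : ℚ) ≠ 0 := Int.cast_ne_zero.2 hsf.ne_zero
  have hsq : (D * q) ^ 2 = ((D * N : ℤ) : ℚ) := by
    push_cast; rw [← hq]; ring
  have hint : IsIntegral ℤ (D * q) :=
    .of_pow two_pos (hsq ▸ isIntegral_algebraMap)
  obtain ⟨t, ht⟩ := IsIntegrallyClosed.isIntegral_iff.1 hint
  rw [eq_intCast] at ht
  rw [← ht] at hsq
  obtain ⟨m, rfl⟩ : D ∣ t := (hsf.dvd_pow_iff_dvd two_ne_zero).1 ⟨N, mod_cast hsq⟩
  exact ⟨m, mul_left_cancel₀ hD (by simpa using ht)⟩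

lemma even_and_even_of_four_dvd_sq_sub (hsf : Squarefree D) (hD4 : ¬ D ≡ 1 [ZMOD 4]) {m l : ℤ}
    (h : 4 ∣ m ^ 2 - D * l ^ 2) : Even m ∧ Even l := by
  have hD0 : ¬ (2 * 2 : ℤ) ∣ D := fun h4 ↦ by simpa [Int.isUnit_iff] using hsf 2 h4
  have hD1 : D % 4 ≠ 1 := hD4
  obtain ⟨c, hc⟩ := h
  have hD : D = 4 * (D / 4) + 2 ∨ D = 4 * (D / 4) + 3 := by omega
  rcases Int.even_or_odd' m with ⟨i, rfl | rfl⟩ <;>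
    rcases Int.even_or_odd' l with ⟨j, rfl | rfl⟩ <;>
    rcases hD with hD | hD <;> rw [hD] at hc <;> ring_nf at hc <;> first | omega | simp

lemma exists_zsqrtd_of_isIntegral (hsf : Squarefree D) (hD4 : ¬ D ≡ 1 [ZMOD 4])
    {w : QuadraticAlgebra ℚ D 0} (hw : IsIntegral ℤ w) :
    ∃ a : ℤ√D, w = ⟨a.re, a.im⟩ := by
  obtain ⟨m, hm⟩ := IsIntegrallyClosed.isIntegral_iff.1 (isIntegral_trace_s7 hw)
  obtain ⟨n, hn⟩ := IsIntegrallyClosed.isIntegral_iff.1 (isIntegral_norm_s7 hw)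
  rw [eq_intCast, QuadraticAlgebra.trace_def, zero_mul, add_zero] at hm
  rw [eq_intCast, QuadraticAlgebra.norm_def, zero_mul, zero_mul, add_zero] at hn
  obtain ⟨l, hl⟩ := exists_intCast_eq_of_squarefree_mul_sq hsf (q := 2 * w.im) (N := m ^ 2 - 4 * n)
    (by push_cast; rw [hm, hn]; ring)
  have hnorm : m ^ 2 - D * l ^ 2 = 4 * n := by
    have : (m : ℚ) ^ 2 - D * l ^ 2 = 4 * n := by rw [hm, hl, hn]; ring
    exact_mod_cast this
  obtain ⟨⟨i, rfl⟩, ⟨j, rfl⟩⟩ := even_and_even_of_four_dvd_sq_sub hsf hD4 ⟨n, hnorm⟩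
  push_cast at hm hl
  exact ⟨⟨i, j⟩, QuadraticAlgebra.ext (by linarith) (by linarith)⟩

lemma not_isSquare_of_squarefree (hsf : Squarefree D) (hD1 : D ≠ 1) : ¬ IsSquare D := by
  rintro ⟨r, rfl⟩
  rcases Int.isUnit_iff.1 (hsf r dvd_rfl) with rfl | rfl <;> exact hD1 rfl

variable {K : Type*} [Field K] [CharZero K] {s : K}

lemma exists_zsqrtd_eq_of_mem_adjoin (hsf : Squarefree D) (hD4 : ¬ D ≡ 1 [ZMOD 4])
    (hs : s * s = D) {w : K} (hw : w ∈ ℚ⟮s⟯) (hint : IsIntegral ℤ w) :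
    ∃ a : ℤ√D, Zsqrtd.lift ⟨s, hs⟩ a = w := by
  have hD : ¬ IsSquare D := not_isSquare_of_squarefree hsf (fun h ↦ hD4 (h ▸ rfl))
  have : Fact (∀ r : ℚ, r ^ 2 ≠ D + 0 * r) :=
    ⟨fun r hr ↦ hD (Rat.isSquare_intCast_iff.1 ⟨r, by rw [← sq, hr, zero_mul, add_zero]⟩)⟩
  let φ : QuadraticAlgebra ℚ D 0 →ₐ[ℚ] K :=
    QuadraticAlgebra.lift ⟨s, by simp [hs, Algebra.smul_def]⟩
  have hle : ℚ⟮s⟯ ≤ φ.fieldRange := adjoin_simple_le_iff.2 ⟨QuadraticAlgebra.omega, by simp [φ]⟩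
  obtain ⟨v, rfl⟩ := hle hw
  have hv : IsIntegral ℤ v := (isIntegral_algHom_iff (φ.restrictScalars ℤ) φ.injective).1 hint
  obtain ⟨a, rfl⟩ := exists_zsqrtd_of_isIntegral hsf hD4 hv
  exact ⟨a, by simp [φ, Algebra.smul_def]⟩

theorem nonempty_zsqrtd_ringEquiv_ringOfIntegers (hsf : Squarefree D) (hD4 : ¬ D ≡ 1 [ZMOD 4])
    (hs : s * s = D) (htop : ℚ⟮s⟯ = ⊤) : Nonempty (ℤ√D ≃+* 𝓞 K) := by
  have hint : IsIntegral ℤ s := .of_pow two_pos (by rw [sq, hs]; exact isIntegral_algebraMap)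
  obtain ⟨t, rfl⟩ : ∃ t : 𝓞 K, (t : K) = s := ⟨⟨s, hint⟩, rfl⟩
  have ht : t * t = (D : 𝓞 K) := RingOfIntegers.ext (by simpa using hs)
  refine ⟨.ofBijective (Zsqrtd.lift ⟨t, ht⟩) ⟨Zsqrtd.lift_injective _ ?_, fun w ↦ ?_⟩⟩
  · exact fun n hn ↦ not_isSquare_of_squarefree hsf (fun h ↦ hD4 (h ▸ rfl)) ⟨n, hn⟩
  · obtain ⟨a, ha⟩ := exists_zsqrtd_eq_of_mem_adjoin hsf hD4 hs (w := w) (htop ▸ mem_top)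
      (RingOfIntegers.isIntegral_coe w)
    exact ⟨a, RingOfIntegers.ext (by simpa using ha)⟩

end QuadraticIntegers

lemma adjoin_simple_gen_eq_top {F E : Type*} [Field F] [Field E] [Algebra F E] (α : E) :
    F⟮AdjoinSimple.gen F α⟯ = ⊤ := by
  apply lift_injective
  rw [lift_adjoin_simple, AdjoinSimple.coe_gen, lift_top]

section QuadField

lemma cpow_half_mul_self (w : ℂ) : w ^ ((1 : ℂ) / 2) * w ^ ((1 : ℂ) / 2) = w := by
  rw [← sq, one_div]
  exact Complex.cpow_nat_inv_pow w two_ne_zero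

instance numberField_quadField (D : ℤ) : NumberField (quadField D) where
  to_finiteDimensional := adjoin.finiteDimensional <| .of_pow two_pos <| by
    rw [sq, cpow_half_mul_self, ← map_intCast (algebraMap ℚ ℂ)]
    exact isIntegral_algebraMap

theorem nonempty_zsqrtd_ringEquiv_ringOfIntegers_quadField {D : ℤ} (hsf : Squarefree D)
    (hD4 : ¬ D ≡ 1 [ZMOD 4]) : Nonempty (ℤ√D ≃+* 𝓞 (quadField D)) :=
  nonempty_zsqrtd_ringEquiv_ringOfIntegers hsf hD4 (Subtype.ext (cpow_half_mul_self D))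
    (adjoin_simple_gen_eq_top _)

theorem exists_classGroup_quadField_orderOf_eq_two_mul {D k : ℤ} {a : ℤ√D} {z : ℕ} (hD : D < -2)
    (hsf : Squarefree D) (hD4 : ¬ D ≡ 1 [ZMOD 4]) (hk : 0 < k) (hco : IsCoprime k (2 * a.re))
    (ha : a.norm = 2 * k ^ z) :
    ∃ (g : ClassGroup (𝓞 (quadField D))) (b : ℤ√D) (z₁ q : ℕ),
      z = z₁ * q ∧ Odd q ∧ b ∣ a ∧ b.norm = 2 * k ^ z₁ ∧ orderOf g = 2 * z₁ := by
  obtain ⟨e⟩ := nonempty_zsqrtd_ringEquiv_ringOfIntegers_quadField hsf hD4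
  have : IsDedekindDomain (ℤ√D) := isDedekindDomain_of_ringEquiv e.symm
  obtain ⟨g, b, z₁, q, hz, hq, hba, hb, hg⟩ := exists_orderOf_eq_two_mul_of_norm_eq hD hk hco ha
  exact ⟨ClassGroup.mulEquiv e g, b, z₁, q, hz, hq, hba, hb, by rw [MulEquiv.orderOf_eq, hg]⟩

end QuadField

theorem stmt_7 (d : ℤ) (hd3 : -d < -3) (hsf : Squarefree (-d)) (hd4 : ¬ -d ≡ 1 [ZMOD 4])
    (k : ℤ) (hk : 1 < k) (hcop : Int.gcd k (2 * d) = 1)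
    (x y z : ℕ) (hx : 0 < x) (hy : 0 < y) (hz : 0 < z) (hxy : Nat.gcd x y = 1)
    (heq : (x : ℤ) ^ 2 + d * (y : ℤ) ^ 2 = 2 * k ^ z) :
    ∃ x₁ y₁ z₁ : ℕ, 0 < x₁ ∧ 0 < y₁ ∧ 0 < z₁ ∧ Nat.gcd x₁ y₁ = 1 ∧
      z₁ ∣ z ∧ Odd (z / z₁) ∧
      (x₁ : ℤ) ^ 2 + d * (y₁ : ℤ) ^ 2 = 2 * k ^ z₁ ∧
      (∃ H : Subgroup (ClassGroup (𝓞 (quadField (-d)))), IsCyclic H ∧ Nat.card H = 2 * z₁) ∧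
      z₁ ∣ quadClassNumber (-d) := by
  have hcop' : IsCoprime k (2 * d) := Int.isCoprime_iff_gcd_eq_one.2 hcop
  have hknu : ¬ IsUnit k := by rw [Int.isUnit_iff]; omega
  have hk2 : IsCoprime k 2 := hcop'.of_mul_right_left
  have hkd : IsCoprime k (-d) := hcop'.of_mul_right_right.neg_right
  have norm_eq (a : ℤ√(-d)) : a.norm = a.re ^ 2 + d * a.im ^ 2 := by rw [Zsqrtd.norm_def]; ring
  let a : ℤ√(-d) := ⟨x, y⟩
  have ha : a.norm = 2 * k ^ z := (norm_eq a).trans heq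
  have hprim : IsCoprime a.re a.im := Nat.isCoprime_iff_coprime.2 hxy
  have hkre : IsCoprime k a.re :=
    isCoprime_re_of_dvd_norm hkd hprim (ha ▸ (dvd_pow_self k hz.ne').mul_left 2)
  obtain ⟨g, b, z₁, q, rfl, hq, hba, hb, hg⟩ := exists_classGroup_quadField_orderOf_eq_two_mul
    (by omega) hsf hd4 (by omega) (hk2.mul_right hkre) ha
  have hz₁ : 0 < z₁ := Nat.pos_of_mul_pos_right hz
  have hbprim : IsCoprime b.re b.im := Zsqrtd.isCoprime_of_dvd_isCoprime hprim hba
  refine ⟨b.re.natAbs, b.im.natAbs, z₁,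
    Int.natAbs_pos.2 (re_ne_zero_of_dvd_norm hknu hkd hbprim
      (hb ▸ (dvd_pow_self k hz₁.ne').mul_left 2)),
    Int.natAbs_pos.2 (im_ne_zero_of_even_norm hbprim (hb ▸ even_two_mul _)), hz₁,
    Int.isCoprime_iff_gcd_eq_one.1 hbprim, dvd_mul_right z₁ q, ?_, ?_,
    ⟨Subgroup.zpowers g, inferInstance, by rw [Nat.card_zpowers, hg]⟩,
    (Dvd.intro_left 2 hg.symm).trans (orderOf_dvd_natCard g)⟩
  · rwa [Nat.mul_div_cancel_left q hz₁]
  · rw [Int.natCast_natAbs, Int.natCast_natAbs, sq_abs, sq_abs, ← norm_eq, hb]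
end

section
/- Let −d < −3 be a squarefree integer with −d ≢ 1 (mod 4), let k > 1 be an integer with gcd(k, 2d) = 1, and let x, y, z be positive integers with gcd(x, y) = 1 and x² + d·y² = 2k^z. Let R be the ring of integers of K = ℚ(√(−d)) and let α = x + y√(−d) ∈ R. Then there is a prime ideal 𝔭 of R with 2R = 𝔭², and there exists an ideal I of R with absolute norm N(I) = k such that the principal ideal αR equals 𝔭·I^z. -/
open IntermediateField NumberField

/-!
Write `s = √D` with `D ≡ 2, 3 [ZMOD 4]`. The ideal `𝔭 = (2, s + D)` has square `(2)`, and it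
contains both `x + y s` and its conjugate `x - y s`, because `x - D y` has the parity of
`x² - D y² = 2 k ^ z`. Cancelling `𝔭²` from `(x + y s)(x - y s) = (2)(k)^z` gives `A B = (k)^z`,
where `(x + y s) = 𝔭 A` and `(x - y s) = 𝔭 B`. The ideals `A` and `B` are coprime, since `2 x`, the
sum of the two elements, is prime to `k`; hence `A` is a `z`-th power `I ^ z`, and taking norms
gives `N(I) = |k|`.
-/

section CommRing

variable {R : Type*} [CommRing R]

theorem isCoprime_ideal_of_isCoprime_add {A B : Ideal R} {a b c : R} (ha : a ∈ A) (hb : b ∈ B)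
    (hc : c ∈ A) (hcop : IsCoprime (a + b) c) : IsCoprime A B := by
  obtain ⟨u, v, huv⟩ := hcop
  rw [Ideal.isCoprime_iff_exists]
  exact ⟨u * a + v * c, A.add_mem (A.mul_mem_left u ha) (A.mul_mem_left v hc),
    u * b, B.mul_mem_left u hb, by linear_combination huv⟩

/-- The ideal `(2, s + s²)`. For `s = √D` with `D ≡ 2, 3 [ZMOD 4]` it is the ramified prime above
`2`, usually written `(2, √D)` for even `D` and `(2, 1 + √D)` for odd `D`. -/
def idealAboveTwo (s : R) : Ideal R :=
  Ideal.span {2, s + s ^ 2}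

variable {s : R} {D : ℤ}

theorem idealAboveTwo_sq (hs : s ^ 2 = D) (hD : D % 4 = 2 ∨ D % 4 = 3) :
    idealAboveTwo s ^ 2 = Ideal.span {2} := by
  -- `(s + D)² - 2 D (s + D) = D (1 - D)`
  obtain ⟨m, hm⟩ : ∃ m : ℤ, D * (1 - D) = 2 + 4 * m := by
    rcases hD with hD | hD
    · obtain ⟨f, rfl⟩ : ∃ f, D = 4 * f + 2 := ⟨D / 4, by lia⟩
      exact ⟨-1 - 3 * f - 4 * f ^ 2, by ring⟩
    · obtain ⟨f, rfl⟩ : ∃ f, D = 4 * f + 3 := ⟨D / 4, by lia⟩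
      exact ⟨-2 - 5 * f - 4 * f ^ 2, by ring⟩
  have hmR : (D : R) * (1 - D) = 2 + 4 * m := mod_cast congrArg (Int.cast : ℤ → R) hm
  rw [idealAboveTwo, hs, pow_two, Ideal.span_pair_mul_span_pair]
  apply le_antisymm
  · rw [Ideal.span_le]
    rintro w (rfl | rfl | rfl | rfl) <;> rw [SetLike.mem_coe, Ideal.mem_span_singleton]
    · exact ⟨2, rfl⟩
    · exact ⟨s + D, rfl⟩
    · exact ⟨s + D, mul_comm _ _⟩
    · exact ⟨D * (s + D) + 1 + 2 * m, by linear_combination hs + hmR⟩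
  · rw [Ideal.span_singleton_le_iff_mem]
    set J := Ideal.span {(2 : R) * 2, 2 * (s + D), (s + D) * 2, (s + D) * (s + D)}
    have h_four : (2 : R) * 2 ∈ J := Ideal.subset_span (by simp)
    have h_cross : 2 * (s + D) ∈ J := Ideal.subset_span (by simp)
    have h_sq : (s + D) * (s + D) ∈ J := Ideal.subset_span (by simp)
    convert J.sub_mem (J.sub_mem h_sq (J.mul_mem_left D h_cross)) (J.mul_mem_left m h_four)
      using 1
    linear_combination -hs - hmR

theorem intCast_add_mul_mem_idealAboveTwo (hs : s ^ 2 = D) {x y : ℤ}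
    (hxy : Even (x ^ 2 - D * y ^ 2)) : (x + y * s : R) ∈ idealAboveTwo s := by
  have h_even : Even (x - D * y) := by
    simpa only [Int.even_sub, Int.even_mul, Int.even_pow' two_ne_zero] using hxy
  obtain ⟨w, hw⟩ := h_even.two_dvd
  have hwR : (x : R) - D * y = 2 * w := mod_cast congrArg (Int.cast : ℤ → R) hw
  rw [idealAboveTwo, hs, Ideal.mem_span_pair]
  exact ⟨w, y, by linear_combination -hwR⟩

end CommRing

theorem exists_span_singleton_eq_mul_pow {R : Type*} [CommRing R] [IsDedekindDomain R]
    {P : Ideal R} (hP : P ≠ ⊥) {e α β c : R} {n : ℕ} (hPe : P ^ 2 = Ideal.span {e})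
    (hα : α ∈ P) (hβ : β ∈ P) (hαβ : α * β = e * c ^ n) (hcop : IsCoprime (α + β) c) :
    ∃ I : Ideal R, Ideal.span {α} = P * I ^ n := by
  obtain ⟨A, hA⟩ := Ideal.dvd_span_singleton.mpr hα
  obtain ⟨B, hB⟩ := Ideal.dvd_span_singleton.mpr hβ
  have hAB : A * B = Ideal.span {c} ^ n := by
    apply mul_left_cancel₀ (pow_ne_zero 2 hP)
    calc P ^ 2 * (A * B) = (P * A) * (P * B) := by ring
      _ = P ^ 2 * Ideal.span {c} ^ n := by
        rw [← hA, ← hB, hPe, Ideal.span_singleton_pow, Ideal.span_singleton_mul_span_singleton,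
          Ideal.span_singleton_mul_span_singleton, hαβ]
  have hαA : α ∈ A := by
    rw [← Ideal.dvd_span_singleton, hA]; exact dvd_mul_left A P
  have hβB : β ∈ B := by
    rw [← Ideal.dvd_span_singleton, hB]; exact dvd_mul_left B P
  have hcA : c ^ n ∈ A := by
    rw [← Ideal.dvd_span_singleton, ← Ideal.span_singleton_pow, ← hAB]; exact dvd_mul_right A B
  have hcopAB : IsCoprime A B := isCoprime_ideal_of_isCoprime_add hαA hβB hcA hcop.pow_right
  obtain ⟨I, rfl⟩ := exists_eq_pow_of_mul_eq_pow_of_coprime hcopAB hAB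
  exact ⟨I, hA⟩

theorem isCoprime_of_sq_sub_mul_sq_eq {R : Type*} [CommRing R] [IsBezout R]
    {D e k x y : R} {n : ℕ} (hn : n ≠ 0) (hxy : IsCoprime x y) (hkD : IsCoprime k D)
    (h : x ^ 2 - D * y ^ 2 = e * k ^ n) : IsCoprime x k := by
  refine IsRelPrime.isCoprime fun g hgx hgk ↦ ?_
  have hg_coprime : IsCoprime g (D * y ^ 2) :=
    (hkD.of_isCoprime_of_dvd_left hgk).mul_right (hxy.of_isCoprime_of_dvd_left hgx).pow_right
  have hg_dvd : g ∣ D * y ^ 2 := by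
    rw [show D * y ^ 2 = x ^ 2 - e * k ^ n by linear_combination -h]
    exact dvd_sub (dvd_pow hgx two_ne_zero) (dvd_mul_of_dvd_right (dvd_pow hgk hn) e)
  exact hg_coprime.isUnit_of_dvd' dvd_rfl hg_dvd

theorem absNorm_eq_of_sq_eq_span_natCast {S : Type*} [CommRing S] [IsDedekindDomain S]
    [Algebra.IsQuadraticExtension ℤ S] {P : Ideal S} {n : ℕ}
    (hP : P ^ 2 = Ideal.span {(n : S)}) : Ideal.absNorm P = n := by
  have h_sq : Ideal.absNorm P ^ 2 = n ^ 2 := by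
    rw [← map_pow, hP, Ideal.absNorm_span_natCast,
      Algebra.IsQuadraticExtension.finrank_eq_two ℤ S]
  exact Nat.pow_left_injective two_ne_zero h_sq

theorem norm_algebraMap_add_mul_of_sq_eq {F L : Type*} [Field F] [Field L] [Algebra F L]
    [Algebra.IsQuadraticExtension F L] {D : F} (hD : ¬ IsSquare D) {s : L}
    (hs : s ^ 2 = algebraMap F L D) (x y : F) :
    Algebra.norm F (algebraMap F L x + algebraMap F L y * s) = x ^ 2 - D * y ^ 2 := by
  have : Fact (∀ r : F, r ^ 2 ≠ D + 0 * r) := ⟨fun r hr ↦ hD ⟨r, by linear_combination -hr⟩⟩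
  let φ : QuadraticAlgebra F D 0 →ₐ[F] L :=
    QuadraticAlgebra.lift ⟨s, by simp [← pow_two, hs, Algebra.smul_def]⟩
  have h_inj : Function.Injective φ := φ.toRingHom.injective
  have h_surj : Function.Surjective φ :=
    (LinearMap.injective_iff_surjective_of_finrank_eq_finrank (f := φ.toLinearMap)
      (by rw [QuadraticAlgebra.finrank_eq_two,
        Algebra.IsQuadraticExtension.finrank_eq_two])).mp h_inj
  have h_apply : φ ⟨x, y⟩ = algebraMap F L x + algebraMap F L y * s := by
    simp [φ, Algebra.smul_def]
  calc Algebra.norm F (algebraMap F L x + algebraMap F L y * s)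
      = Algebra.norm F (⟨x, y⟩ : QuadraticAlgebra F D 0) := by
        rw [← h_apply]
        exact Algebra.norm_eq_of_algEquiv (AlgEquiv.ofBijective φ ⟨h_inj, h_surj⟩) _
    _ = QuadraticAlgebra.norm ⟨x, y⟩ := QuadraticAlgebra.det_toLinearMap_eq_norm _
    _ = x ^ 2 - D * y ^ 2 := by
        rw [QuadraticAlgebra.norm_def]
        ring

theorem not_isSquare_int_of_emod_four {D : ℤ} (hD : D % 4 = 2 ∨ D % 4 = 3) : ¬ IsSquare D := by
  rintro ⟨a, rfl⟩
  rcases Int.even_or_odd' a with ⟨b, rfl | rfl⟩ <;> ring_nf at hD <;> lia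

section NumberField

variable {K : Type*} [Field K] [NumberField K] [Algebra.IsQuadraticExtension ℚ K]

instance isQuadraticExtension_ringOfIntegers : Algebra.IsQuadraticExtension ℤ (𝓞 K) where
  finrank_eq_two' := by
    rw [RingOfIntegers.rank, Algebra.IsQuadraticExtension.finrank_eq_two]

theorem norm_intCast_add_mul {D : ℤ} (hD : ¬ IsSquare D) {s : 𝓞 K} (hs : s ^ 2 = D) (x y : ℤ) :
    Algebra.norm ℤ (x + y * s : 𝓞 K) = x ^ 2 - D * y ^ 2 := by
  have hsK : (s : K) ^ 2 = algebraMap ℚ K D := by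
    simpa using congrArg (algebraMap (𝓞 K) K) hs
  have h_norm := norm_algebraMap_add_mul_of_sq_eq (mt Rat.isSquare_intCast_iff.mp hD) hsK x y
  rw [← Int.cast_inj (α := ℚ), Algebra.coe_norm_int]
  simpa using h_norm

variable {D : ℤ} {s : 𝓞 K}

theorem absNorm_idealAboveTwo (hs : s ^ 2 = D) (hD : D % 4 = 2 ∨ D % 4 = 3) :
    Ideal.absNorm (idealAboveTwo s) = 2 :=
  absNorm_eq_of_sq_eq_span_natCast (by simpa using idealAboveTwo_sq hs hD)

theorem isPrime_idealAboveTwo (hs : s ^ 2 = D) (hD : D % 4 = 2 ∨ D % 4 = 3) :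
    (idealAboveTwo s).IsPrime :=
  Ideal.isPrime_of_irreducible_absNorm (absNorm_idealAboveTwo hs hD ▸ Nat.prime_two)

theorem idealAboveTwo_ne_bot (hs : s ^ 2 = D) (hD : D % 4 = 2 ∨ D % 4 = 3) :
    idealAboveTwo s ≠ ⊥ := by
  rw [Ne, ← Ideal.absNorm_eq_zero_iff, absNorm_idealAboveTwo hs hD]
  exact two_ne_zero

theorem absNorm_eq_natAbs_of_span_eq (hs : s ^ 2 = D) (hD : D % 4 = 2 ∨ D % 4 = 3)
    {k x y : ℤ} {z : ℕ} (hz : z ≠ 0) (heq : x ^ 2 - D * y ^ 2 = 2 * k ^ z) {I : Ideal (𝓞 K)}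
    (hI : Ideal.span {(x + y * s : 𝓞 K)} = idealAboveTwo s * I ^ z) :
    Ideal.absNorm I = k.natAbs := by
  have h_norm : 2 * Ideal.absNorm I ^ z = 2 * k.natAbs ^ z := by
    calc 2 * Ideal.absNorm I ^ z = Ideal.absNorm (Ideal.span {(x + y * s : 𝓞 K)}) := by
          rw [hI, map_mul, map_pow, absNorm_idealAboveTwo hs hD]
      _ = 2 * k.natAbs ^ z := by
          rw [Ideal.absNorm_span_singleton,
            norm_intCast_add_mul (not_isSquare_int_of_emod_four hD) hs, heq, Int.natAbs_mul,
            Int.natAbs_pow]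
          rfl
  exact Nat.pow_left_injective hz (Nat.eq_of_mul_eq_mul_left two_pos h_norm)

end NumberField

theorem stmt_8_general {K : Type*} [Field K] [NumberField K] [Algebra.IsQuadraticExtension ℚ K]
    {D : ℤ} {s : 𝓞 K} (hs : s ^ 2 = D) (hD : D % 4 = 2 ∨ D % 4 = 3) {k x y : ℤ} {z : ℕ}
    (hz : z ≠ 0) (hcop : IsCoprime k (2 * D)) (hxy : IsCoprime x y)
    (heq : x ^ 2 - D * y ^ 2 = 2 * k ^ z) :
    ∃ 𝔭 I : Ideal (𝓞 K), 𝔭.IsPrime ∧ Ideal.span {2} = 𝔭 ^ 2 ∧ Ideal.absNorm I = k.natAbs ∧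
      Ideal.span {(x + y * s : 𝓞 K)} = 𝔭 * I ^ z := by
  have h_even : Even (x ^ 2 - D * y ^ 2) := heq ▸ even_two_mul _
  have hα := intCast_add_mul_mem_idealAboveTwo hs h_even
  have hβ := intCast_add_mul_mem_idealAboveTwo hs (x := x) (y := -y) (by rwa [neg_sq])
  have hprod : (x + y * s) * (x + (-y : ℤ) * s) = 2 * (k : 𝓞 K) ^ z := by
    have heqR : (x : 𝓞 K) ^ 2 - D * y ^ 2 = 2 * k ^ z :=
      mod_cast congrArg (Int.cast : ℤ → 𝓞 K) heq
    push_cast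
    linear_combination heqR - (y : 𝓞 K) ^ 2 * hs
  have hsum : IsCoprime ((x + y * s) + (x + (-y : ℤ) * s)) (k : 𝓞 K) := by
    have h2x : IsCoprime (2 * x) k := hcop.of_mul_right_left.symm.mul_left
      (isCoprime_of_sq_sub_mul_sq_eq hz hxy hcop.of_mul_right_right heq)
    convert h2x.intCast (R := 𝓞 K) using 1
    push_cast
    ring
  obtain ⟨I, hI⟩ := exists_span_singleton_eq_mul_pow (idealAboveTwo_ne_bot hs hD)
    (idealAboveTwo_sq hs hD) hα hβ hprod hsum
  exact ⟨idealAboveTwo s, I, isPrime_idealAboveTwo hs hD, (idealAboveTwo_sq hs hD).symm,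
    absNorm_eq_natAbs_of_span_eq hs hD hz heq hI, hI⟩

theorem isQuadraticExtension_adjoin_of_sq_eq {F L : Type*} [Field F] [Field L] [Algebra F L]
    {a : F} (ha : ¬ IsSquare a) {r : L} (hr : r ^ 2 = algebraMap F L a) :
    Algebra.IsQuadraticExtension F F⟮r⟯ where
  finrank_eq_two' := by
    have h_irr : Irreducible (Polynomial.X ^ 2 - Polynomial.C a) :=
      X_pow_sub_C_irreducible_of_prime Nat.prime_two fun b hb ↦ ha ⟨b, by rw [← hb, pow_two]⟩
    have h_monic : (Polynomial.X ^ 2 - Polynomial.C a).Monic :=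
      Polynomial.monic_X_pow_sub_C a two_ne_zero
    have h_root : Polynomial.aeval r (Polynomial.X ^ 2 - Polynomial.C a) = 0 := by simp [hr]
    rw [adjoin.finrank ⟨_, h_monic, h_root⟩,
      ← minpoly.eq_of_irreducible_of_monic h_irr h_root h_monic, Polynomial.natDegree_X_pow_sub_C]

open ComplexOrder in
theorem intCast_neg_cpow_half {d : ℤ} (hd : 0 ≤ d) :
    ((-d : ℤ) : ℂ) ^ ((1 : ℂ) / 2) = Real.sqrt d * Complex.I := by
  have hdC : (0 : ℂ) ≤ d := mod_cast hd
  rw [one_div, ← Complex.sqrt, Int.cast_neg, Complex.sqrt_neg_of_nonneg hdC,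
    Complex.sqrt_of_nonneg hdC, Complex.intCast_re, mul_comm]

theorem isQuadraticExtension_quadField {D : ℤ} (hD : ¬ IsSquare D) :
    Algebra.IsQuadraticExtension ℚ (quadField D) :=
  isQuadraticExtension_adjoin_of_sq_eq (mt Rat.isSquare_intCast_iff.mp hD)
    (by simp)

theorem exists_ringOfIntegers_quadField_sq_eq (D : ℤ) :
    ∃ s : 𝓞 (quadField D), s ^ 2 = D ∧
      ((s : quadField D) : ℂ) = (D : ℂ) ^ ((1 : ℂ) / 2) := by
  let r : quadField D := ⟨(D : ℂ) ^ ((1 : ℂ) / 2), mem_adjoin_simple_self ℚ _⟩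
  have hr : r ^ 2 = D := Subtype.ext (by simp [r])
  have hr_int : IsIntegral ℤ r := IsIntegral.of_pow two_pos (hr ▸ isIntegral_algebraMap (x := D))
  exact ⟨⟨r, hr_int⟩, RingOfIntegers.ext hr, rfl⟩

theorem emod_four_of_squarefree {D : ℤ} (hsf : Squarefree D) (hD : ¬ D ≡ 1 [ZMOD 4]) :
    D % 4 = 2 ∨ D % 4 = 3 := by
  have h_four : ¬ (2 * 2 : ℤ) ∣ D := fun h ↦ by simpa using Int.isUnit_iff.mp (hsf 2 h)
  rw [Int.ModEq] at hD
  lia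

theorem stmt_8 (d : ℤ) (hd3 : -d < -3) (hsf : Squarefree (-d)) (hd4 : ¬ -d ≡ 1 [ZMOD 4])
    (k : ℤ) (hk : 1 < k) (hcop : Int.gcd k (2 * d) = 1)
    (x y z : ℕ) (hx : 0 < x) (hy : 0 < y) (hz : 0 < z) (hxy : Nat.gcd x y = 1)
    (heq : (x : ℤ) ^ 2 + d * (y : ℤ) ^ 2 = 2 * k ^ z) :
    ∃ α : 𝓞 (quadField (-d)),
      ((α : quadField (-d)) : ℂ) = (x : ℂ) + (y : ℂ) * Real.sqrt d * Complex.I ∧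
      ∃ 𝔭 I : Ideal (𝓞 (quadField (-d))), 𝔭.IsPrime ∧
        Ideal.span {(2 : 𝓞 (quadField (-d)))} = 𝔭 ^ 2 ∧
        -- the absolute norm of `I` (the cardinality of the quotient ring) is `k`
        (Nat.card (𝓞 (quadField (-d)) ⧸ I) : ℤ) = k ∧
        Ideal.span {α} = 𝔭 * I ^ z := by
  have hD := emod_four_of_squarefree hsf hd4
  have := isQuadraticExtension_quadField (not_isSquare_int_of_emod_four hD)
  have : NumberField (quadField (-d)) := { }
  obtain ⟨s, hs, hs_coe⟩ := exists_ringOfIntegers_quadField_sq_eq (-d)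
  have hcop' : IsCoprime k (2 * -d) := by
    rwa [mul_neg, IsCoprime.neg_right_iff, Int.isCoprime_iff_gcd_eq_one]
  obtain ⟨𝔭, I, h𝔭, h_two, h_norm, h_span⟩ := stmt_8_general hs hD hz.ne' hcop'
    (Nat.isCoprime_iff_coprime.mpr hxy) (by linear_combination heq)
  refine ⟨x + y * s, ?_, 𝔭, I, h𝔭, h_two, ?_, mod_cast h_span⟩
  · rw [intCast_neg_cpow_half (by lia)] at hs_coe
    simp [hs_coe, mul_assoc]
  · rw [← Submodule.cardQuot_apply, ← Ideal.absNorm_apply, h_norm]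
    lia
end

section
/- Let d be a squarefree positive integer, k an odd integer with k > 1 and gcd(k, 2d) = 1, n₁ a positive integer, and u, v positive integers with gcd(u, v) = 1 and u² + d·v² = 2k^{n₁}. Set α = (u + v√d·i)/√2 and β = (−u + v√d·i)/√2 in ℂ. Then (α + β)² = −2d·v² and α·β = −k^{n₁} are coprime rational integers, and α/β is not a root of unity. -/
/-!
If `ζ = α / β` were a root of unity, then `(α + β) ^ 2 / (α * β) = ζ + ζ⁻¹ + 2` would be an
algebraic integer. So the integer `α * β` would divide the integer `(α + β) ^ 2` in the ring of
algebraic integers; as the two are coprime, `α * β` would be a unit there, hence already in `ℤ`.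
But `α * β = -k ^ n₁` is not `±1`.
-/

theorem isUnit_of_isCoprime_of_mul_isIntegral_eq {R A : Type*} [CommRing R] [CommRing A]
    [Algebra R A] [FaithfulSMul R A] {p q : R} (hpq : IsCoprime p q) {x : A}
    (hx : IsIntegral R x) (hqx : algebraMap R A q * x = algebraMap R A p) : IsUnit q := by
  let S := integralClosure R A
  have q_dvd_p : algebraMap R S q ∣ algebraMap R S p := ⟨⟨x, hx⟩, Subtype.ext hqx.symm⟩
  have : FaithfulSMul R S :=
    (faithfulSMul_iff_algebraMap_injective R S).mpr fun _ _ h =>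
      FaithfulSMul.algebraMap_injective R A (congrArg Subtype.val h)
  have isUnit_q : IsUnit (algebraMap R S q) :=
    (hpq.map (algebraMap R S)).symm.isUnit_of_dvd q_dvd_p
  exact isUnit_of_map_unit (algebraMap R S) q isUnit_q

theorem isIntegral_of_isOfFinOrder (R : Type*) {A : Type*} [CommRing R] [Ring A] [Algebra R A]
    {ζ : A} (hζ : IsOfFinOrder ζ) : IsIntegral R ζ := by
  obtain ⟨N, hN, hpow⟩ := hζ.exists_pow_eq_one
  exact IsIntegral.of_pow hN (hpow ▸ isIntegral_one)

theorem isOfFinOrder_inv_of_isOfFinOrder {G : Type*} [DivisionMonoid G] {ζ : G}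
    (hζ : IsOfFinOrder ζ) : IsOfFinOrder ζ⁻¹ := by
  obtain ⟨N, hN, hpow⟩ := hζ.exists_pow_eq_one
  exact isOfFinOrder_iff_pow_eq_one.mpr ⟨N, hN, by rw [inv_pow, hpow, inv_one]⟩

theorem mul_mul_div_add_inv_div_add_two {K : Type*} [Field K] {α β : K} (hα : α ≠ 0)
    (hβ : β ≠ 0) : α * β * (α / β + (α / β)⁻¹ + 2) = (α + β) ^ 2 := by
  field_simp
  ring

theorem isUnit_of_isOfFinOrder_div {R K : Type*} [CommRing R] [Field K] [Algebra R K]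
    [FaithfulSMul R K] {p q : R} (hpq : IsCoprime p q) {α β : K}
    (hadd : (α + β) ^ 2 = algebraMap R K p) (hmul : α * β = algebraMap R K q)
    (hζ : IsOfFinOrder (α / β)) : IsUnit q := by
  obtain ⟨hα, hβ⟩ : α ≠ 0 ∧ β ≠ 0 := div_ne_zero_iff.mp hζ.isUnit.ne_zero
  have integral_sum : IsIntegral R (α / β + (α / β)⁻¹ + 2) :=
    ((isIntegral_of_isOfFinOrder R hζ).add
      (isIntegral_of_isOfFinOrder R (isOfFinOrder_inv_of_isOfFinOrder hζ))).add
      (mod_cast isIntegral_natCast (R := R) (B := K) 2)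
  refine isUnit_of_isCoprime_of_mul_isIntegral_eq hpq integral_sum ?_
  rw [← hmul, ← hadd, mul_mul_div_add_inv_div_add_two hα hβ]

theorem isCoprime_two_mul_mul_sq_of_sq_add_mul_sq_eq {R : Type*} [CommRing R] {d u v m : R}
    (hm : IsCoprime m (2 * d)) (huv : IsCoprime u v) (h : u ^ 2 + d * v ^ 2 = 2 * m) :
    IsCoprime (2 * d * v ^ 2) m := by
  have sq_add_coprime : IsCoprime (u ^ 2 + v * (d * v)) v :=
    huv.pow_left.add_mul_left_left (d * v)
  have two_mul_coprime : IsCoprime (2 * m) v := by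
    convert sq_add_coprime using 1
    rw [← h]
    ring
  exact hm.symm.mul_left two_mul_coprime.of_mul_left_right.symm.pow_left

section SqrtTwo

variable {K : Type*} [Field K] {s : K}

theorem add_div_add_neg_add_div_sq (hs : s ^ 2 = 2) (x y : K) :
    ((x + y) / s + (-x + y) / s) ^ 2 = 2 * y ^ 2 := by
  have sum_eq : x + y + (-x + y) = 2 * y := by ring
  rw [← add_div, div_pow, hs, sum_eq, mul_pow, sq 2, mul_div_right_comm, mul_self_div_self]

theorem add_div_mul_neg_add_div (hs : s ^ 2 = 2) (x y : K) :
    (x + y) / s * ((-x + y) / s) = (y ^ 2 - x ^ 2) / 2 := by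
  rw [div_mul_div_comm, ← sq s, hs]
  ring

end SqrtTwo

theorem ofReal_sqrt_sq {x : ℝ} (hx : 0 ≤ x) : (Real.sqrt x : ℂ) ^ 2 = x := by
  rw [← Complex.ofReal_pow, Real.sq_sqrt hx]

theorem mul_sqrt_mul_I_sq {x : ℝ} (hx : 0 ≤ x) (z : ℂ) :
    (z * Real.sqrt x * Complex.I) ^ 2 = -(x * z ^ 2) := by
  rw [mul_pow, mul_pow, ofReal_sqrt_sq hx, Complex.I_sq]
  ring

theorem stmt_9_general (d : ℕ) (u v m : ℤ) (hm : 1 < m) (hcop : IsCoprime m (2 * d))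
    (huv : IsCoprime u v) (heq : u ^ 2 + d * v ^ 2 = 2 * m) (α β : ℂ)
    (hα : α = ((u : ℂ) + (v : ℂ) * Real.sqrt d * Complex.I) / Real.sqrt 2)
    (hβ : β = (-(u : ℂ) + (v : ℂ) * Real.sqrt d * Complex.I) / Real.sqrt 2) :
    (α + β) ^ 2 = ((-2 * d * v ^ 2 : ℤ) : ℂ) ∧
    α * β = ((-m : ℤ) : ℂ) ∧
    IsCoprime (-2 * (d : ℤ) * v ^ 2) (-m) ∧
    ¬ IsOfFinOrder (α / β) := by
  have sqrt_two_sq : (Real.sqrt 2 : ℂ) ^ 2 = 2 := mod_cast ofReal_sqrt_sq zero_le_two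
  have heq_complex : (u : ℂ) ^ 2 + d * (v : ℂ) ^ 2 = 2 * m := mod_cast heq
  have hadd : (α + β) ^ 2 = ((-2 * d * v ^ 2 : ℤ) : ℂ) := by
    rw [hα, hβ, add_div_add_neg_add_div_sq sqrt_two_sq, mul_sqrt_mul_I_sq d.cast_nonneg]
    push_cast
    ring
  have hmul : α * β = ((-m : ℤ) : ℂ) := by
    rw [hα, hβ, add_div_mul_neg_add_div sqrt_two_sq, mul_sqrt_mul_I_sq d.cast_nonneg]
    push_cast
    linear_combination (-1 / 2 : ℂ) * heq_complex
  have hpq : IsCoprime (-2 * (d : ℤ) * v ^ 2) (-m) := by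
    simpa only [neg_mul] using
      (isCoprime_two_mul_mul_sq_of_sq_add_mul_sq_eq hcop huv heq).neg_neg
  refine ⟨hadd, hmul, hpq, fun hζ => ?_⟩
  have isUnit_neg_m : IsUnit (-m) := isUnit_of_isOfFinOrder_div hpq hadd hmul hζ
  rcases Int.isUnit_iff.mp isUnit_neg_m with h | h <;> omega

theorem stmt_9 (d : ℕ) (hd : 0 < d) (hsf : Squarefree d)
    (k : ℤ) (hk : 1 < k) (hko : Odd k) (hcop : Int.gcd k (2 * d) = 1)
    (n₁ : ℕ) (hn₁ : 0 < n₁)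
    (u v : ℕ) (hu : 0 < u) (hv : 0 < v) (huv : Nat.gcd u v = 1)
    (heq : (u : ℤ) ^ 2 + d * (v : ℤ) ^ 2 = 2 * k ^ n₁)
    (α β : ℂ)
    (hα : α = ((u : ℂ) + (v : ℂ) * Real.sqrt d * Complex.I) / Real.sqrt 2)
    (hβ : β = (-(u : ℂ) + (v : ℂ) * Real.sqrt d * Complex.I) / Real.sqrt 2) :
    (α + β) ^ 2 = ((-2 * d * v ^ 2 : ℤ) : ℂ) ∧
    α * β = ((-k ^ n₁ : ℤ) : ℂ) ∧
    IsCoprime (-2 * (d : ℤ) * (v : ℤ) ^ 2) (-k ^ n₁) ∧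
    ¬ ∃ N : ℕ, 0 < N ∧ (α / β) ^ N = 1 := by
  rw [← isOfFinOrder_iff_pow_eq_one]
  exact stmt_9_general d u v (k ^ n₁) (one_lt_pow₀ hk hn₁.ne')
    (Int.isCoprime_iff_gcd_eq_one.mpr hcop).pow_left (Nat.isCoprime_iff_coprime.mpr huv) heq α β
    (mod_cast hα) (mod_cast hβ)
end

section
/- For every odd integer n ≥ 3, there are infinitely many pairs of distinct negative integers (d, d+1), with both d < 0 and d + 1 < 0, such that n divides the class number of the imaginary quadratic field ℚ(√d) and n divides the class number of the imaginary quadratic field ℚ(√(d+1)). Equivalently, the set of such pairs of fields (ℚ(√d), ℚ(√(d+1))) is infinite. -/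
open IntermediateField NumberField

/-!
For `n` odd, let `α` be a root of `X² - X + Uⁿ` in an imaginary quadratic field `K`. The
conjugates `α`, `1 - α` are coprime with product `Uⁿ`, so `(α) = Iⁿ` for an ideal `I`. If the
units of `K` are `±1` and the class of `I` had order `n / m`, then `α = βᵐ` where `β` has some
trace `s` and norm `V ≥ U`. Now `s ∣ βᵐ + β̄ᵐ = 1`, and
`βᵐ + β̄ᵐ ≡ sᵐ - m V sᵐ⁻² (mod V²)` forces `m = 1` or `V ∣ m`; the latter is impossible for
`U > n`. Hence `n` divides the class number of `ℚ(√(1 - 4Uⁿ))` as soon as `U > n` and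
`U ≢ 1 (mod 3)`, which excludes `ℚ(√-3)`.

The construction can be iterated: with `3 ∣ U`, `W = 4Uⁿ - 1` and `d = -4Wⁿ`, the field `ℚ(√d)`
is `ℚ(√-W) = ℚ(√(1 - 4Uⁿ))` because `n` is odd, while `d + 1 = 1 - 4Wⁿ`.
-/

section PowerSums

variable {R : Type*} [CommRing R]

theorem mul_sq_dvd_pow_add_pow_sub (x y : R) (k : ℕ) :
    (x * y) ^ 2 ∣ x ^ (k + 2) + y ^ (k + 2) -
      ((x + y) ^ (k + 2) - (k + 2) * (x * y) * (x + y) ^ k) := by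
  induction k using Nat.twoStepInduction with
  | zero => exact ⟨0, by push_cast; ring⟩
  | one => exact ⟨0, by push_cast; ring⟩
  | more k ih₀ ih₁ =>
    obtain ⟨a, ha⟩ := ih₀
    obtain ⟨b, hb⟩ := ih₁
    refine ⟨(k + 2) * (x + y) ^ k + (x + y) * b - x * y * a, ?_⟩
    push_cast at hb ⊢
    linear_combination (x + y) * hb - x * y * ha

theorem intCast_dvd_intCast_iff_of_free [Nontrivial R] [Module.Free ℤ R] [Module.Finite ℤ R]
    {a b : ℤ} : (a : R) ∣ b ↔ a ∣ b := by
  refine ⟨fun h ↦ ?_, Int.cast_dvd_cast a b⟩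
  have norm_dvd : a ^ Module.finrank ℤ R ∣ b ^ Module.finrank ℤ R := by
    simpa only [← Algebra.norm_algebraMap (S := R), eq_intCast] using map_dvd (Algebra.norm ℤ) h
  exact (Int.pow_dvd_pow_iff Module.finrank_pos.ne').1 norm_dvd

theorem dvd_of_pow_add_pow_eq_one [Nontrivial R] [Module.Free ℤ R] [Module.Finite ℤ R]
    {x y : R} {s V : ℤ} {m : ℕ} (hs : x + y = s) (hV : x * y = V) (hV2 : 2 < V)
    (hm : Odd m) (hm1 : m ≠ 1) (h : x ^ m + y ^ m = 1) : V ∣ m := by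
  obtain ⟨k, rfl⟩ : ∃ k, m = k + 2 := ⟨m - 2, by have := hm.pos; omega⟩
  have hk : Odd k := by simpa [parity_simps] using hm
  have trace_dvd_one : s ∣ 1 := by
    simpa [hs, h, ← intCast_dvd_intCast_iff_of_free (R := R)] using hm.add_dvd_pow_add_pow x y
  have modEq_one : V ^ 2 ∣ 1 - (s ^ (k + 2) - (k + 2) * V * s ^ k) := by
    rw [← intCast_dvd_intCast_iff_of_free (R := R)]
    simpa [hs, hV, h] using mul_sq_dvd_pow_add_pow_sub x y k
  rcases Int.isUnit_iff.1 (isUnit_of_dvd_one trace_dvd_one) with rfl | rfl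
  · obtain ⟨q, hq⟩ := modEq_one
    refine ⟨q, mul_left_cancel₀ (a := V) (by omega) ?_⟩
    simp only [one_pow] at hq
    push_cast
    linear_combination hq
  · obtain ⟨q, hq⟩ := modEq_one
    rw [hm.neg_one_pow, hk.neg_one_pow] at hq
    have hdvd : V ∣ 2 := ⟨V * q + (k + 2), by linear_combination hq⟩
    exact absurd (Int.le_of_dvd two_pos hdvd) hV2.not_ge

end PowerSums

section ClassGroup

variable {R : Type*} [CommRing R] [IsDedekindDomain R] {α : R} {n : ℕ}

theorem exists_span_singleton_eq_pow {α' c : R} (hcop : IsCoprime α α') (h : α * α' = c ^ n) :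
    ∃ I : Ideal R, Ideal.span {α} = I ^ n := by
  classical
  refine exists_eq_pow_of_mul_eq_pow_of_coprime (b := Ideal.span {α'}) (c := Ideal.span {c}) ?_ ?_
  · rwa [Ideal.isCoprime_span_singleton_iff]
  · rw [Ideal.span_singleton_mul_span_singleton, h, Ideal.span_singleton_pow]

theorem exists_eq_pow_of_isPrincipal_pow {I : Ideal R} {k m : ℕ} (hI : (I ^ k).IsPrincipal)
    (hα : Ideal.span {α} = I ^ (k * m)) (hunit : ∀ u : Rˣ, ∃ v : Rˣ, v ^ m = u) :
    ∃ β : R, α = β ^ m := by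
  obtain ⟨β, hβ⟩ := hI
  have hspan : Ideal.span {β ^ m} = Ideal.span {α} := by
    rw [← Ideal.span_singleton_pow, hα, pow_mul, hβ, Ideal.submodule_span_eq]
  obtain ⟨u, hu⟩ := Ideal.span_singleton_eq_span_singleton.1 hspan
  obtain ⟨v, rfl⟩ := hunit u
  exact ⟨β * v, by rw [mul_pow, ← hu, Units.val_pow_eq_pow_val]⟩

theorem dvd_natCard_classGroup_of_mul_eq_pow {α' c : R} (hn : n ≠ 0) (hα : α ≠ 0)
    (hcop : IsCoprime α α') (h : α * α' = c ^ n) (hunit : ∀ u : Rˣ, ∃ v : Rˣ, v ^ n = u)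
    (hpow : ∀ m, m ∣ n → ∀ β, α = β ^ m → m = 1) :
    n ∣ Nat.card (ClassGroup R) := by
  obtain ⟨I, hI⟩ := exists_span_singleton_eq_pow hcop h
  have hI0 : I ∈ nonZeroDivisors (Ideal R) := by
    refine mem_nonZeroDivisors_of_ne_zero ?_
    rintro rfl
    rw [zero_pow hn, Ideal.zero_eq_bot, Ideal.span_singleton_eq_bot] at hI
    exact hα hI
  let x : ClassGroup R := ClassGroup.mk0 ⟨I, hI0⟩
  have pow_eq_one_iff (k : ℕ) : x ^ k = 1 ↔ (I ^ k).IsPrincipal := by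
    rw [← ClassGroup.mk0_eq_one_iff (pow_mem hI0 k), ← map_pow, SubmonoidClass.mk_pow]
  obtain ⟨m, hm⟩ : orderOf x ∣ n := orderOf_dvd_of_pow_eq_one <| by
    rw [pow_eq_one_iff, ← hI]
    exact ⟨α, rfl⟩
  have hunit_m (u : Rˣ) : ∃ v : Rˣ, v ^ m = u := by
    obtain ⟨v, rfl⟩ := hunit u
    exact ⟨v ^ orderOf x, by rw [← pow_mul, ← hm]⟩
  obtain ⟨β, hβ⟩ := exists_eq_pow_of_isPrincipal_pow
    ((pow_eq_one_iff _).1 (pow_orderOf_eq_one x)) (hm ▸ hI) hunit_m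
  rw [hm, hpow m (hm ▸ dvd_mul_left m _) β hβ, mul_one]
  exact orderOf_dvd_natCard x

end ClassGroup

theorem not_isSquare_four_mul_sub_one (a : ℤ) : ¬ IsSquare (4 * a - 1) := by
  rintro ⟨c, hc⟩
  rcases Int.even_or_odd' c with ⟨e, rfl | rfl⟩ <;> ring_nf at hc <;> omega

theorem not_isSquare_three_mul_four_mul_pow_sub_one {n U : ℕ} (hn : Odd n) (hU : ¬ U ≡ 1 [MOD 3]) :
    ¬ IsSquare (3 * (4 * (U : ℤ) ^ n - 1)) := by
  rintro ⟨c, hc⟩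
  obtain ⟨e, rfl⟩ : 3 ∣ c := by
    rcases Int.prime_three.dvd_mul.1 ⟨_, hc.symm⟩ with h | h <;> exact h
  have hE : 4 * (U : ℤ) ^ n - 1 = 3 * e ^ 2 := by linarith
  have hpow : (U : ZMod 3) ^ n = 1 := by
    have hE' := congr_arg (Int.cast : ℤ → ZMod 3) hE
    push_cast at hE'
    have h3 : (3 : ZMod 3) = 0 := rfl
    linear_combination hE' + (e ^ 2 - (U : ZMod 3) ^ n) * h3
  have htri : ∀ u : ZMod 3, u = 0 ∨ u = -1 ∨ u = 1 := by decide
  rcases htri U with h | h | h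
  · simp [h, hn.pos.ne'] at hpow
  · rw [h, hn.neg_one_pow] at hpow
    exact absurd hpow (by decide)
  · exact hU ((ZMod.natCast_eq_natCast_iff U 1 3).1 (by simpa using h))

section ImaginaryQuadratic

open IsCMField

theorem complexConj_complexConj {K : Type*} [Field K] [NumberField K] [IsCMField K] (x : 𝓞 K) :
    ringOfIntegersComplexConj K (ringOfIntegersComplexConj K x) = x :=
  RingOfIntegers.ext (complexConj_apply_apply K _)

variable {K : Type*} [Field K] [NumberField K] [Algebra.IsQuadraticExtension ℚ K]
  [IsTotallyComplex K]

instance isCMField_of_isQuadraticExtension : IsCMField K := .ofCMExtension ℚ K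

local notation "σ" => ringOfIntegersComplexConj K

theorem exists_intCast_eq_of_complexConj_eq_self {x : 𝓞 K} (hx : σ x = x) :
    ∃ k : ℤ, (k : 𝓞 K) = x := by
  obtain ⟨y, rfl⟩ := (ringOfIntegersComplexConj_eq_self_iff K x).1 hx
  let q : ℚ := (CMExtension.equivMaximalRealSubfield ℚ K).symm y
  have hq : algebraMap ℚ K q = algebraMap (𝓞 K) K (algebraMap _ _ y) :=
    CMExtension.algebraMap_equivMaximalRealSubfield_symm_apply ℚ K y
  have q_integral : IsIntegral ℤ q := by
    rw [← isIntegral_algebraMap_iff (algebraMap ℚ K).injective, hq]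
    exact RingOfIntegers.isIntegral_coe _
  obtain ⟨k, hk⟩ := IsIntegrallyClosed.isIntegral_iff.1 q_integral
  exact ⟨k, RingOfIntegers.ext <| by simpa [← hk] using hq⟩

theorem exists_intCast_eq_add_complexConj (x : 𝓞 K) : ∃ t : ℤ, (t : 𝓞 K) = x + σ x :=
  exists_intCast_eq_of_complexConj_eq_self <| by
    rw [map_add, complexConj_complexConj, add_comm]

theorem exists_natCast_eq_mul_complexConj (x : 𝓞 K) : ∃ V : ℕ, (V : 𝓞 K) = x * σ x := by
  obtain ⟨k, hk⟩ : ∃ k : ℤ, (k : 𝓞 K) = x * σ x :=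
    exists_intCast_eq_of_complexConj_eq_self <| by
      rw [map_mul, complexConj_complexConj, mul_comm]
  obtain ⟨φ⟩ : Nonempty (K →+* ℂ) := inferInstance
  have hφ : (k : ℂ) = Complex.normSq (φ x) := by
    rw [← Complex.mul_conj, ← complexEmbedding_complexConj, ← coe_ringOfIntegersComplexConj,
      ← map_mul, ← map_mul, ← hk]
    simp
  have hk0 : 0 ≤ k := by
    have : (k : ℝ) = Complex.normSq (φ x) := by exact_mod_cast hφ
    exact_mod_cast this ▸ Complex.normSq_nonneg _
  lift k to ℕ using hk0
  exact ⟨k, by exact_mod_cast hk⟩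

theorem complexConj_eq_neg_of_sq_eq_neg {x : 𝓞 K} {a : ℤ} (ha : 0 < a) (hx : x ^ 2 = -a) :
    σ x = -x := by
  have hsq : σ x ^ 2 = x ^ 2 := by rw [← map_pow, hx, map_neg, map_intCast]
  refine (sq_eq_sq_iff_eq_or_eq_neg.1 hsq).resolve_left fun hfix ↦ ?_
  obtain ⟨k, rfl⟩ := exists_intCast_eq_of_complexConj_eq_self hfix
  have : k ^ 2 = -a := by exact_mod_cast hx
  nlinarith [sq_nonneg k]

theorem isSquare_mul_of_sq_eq_neg {x y : 𝓞 K} {a b : ℤ} (ha : 0 < a) (hb : 0 < b)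
    (hx : x ^ 2 = -a) (hy : y ^ 2 = -b) : IsSquare (a * b) := by
  obtain ⟨k, hk⟩ : ∃ k : ℤ, (k : 𝓞 K) = x * y :=
    exists_intCast_eq_of_complexConj_eq_self <| by
      rw [map_mul, complexConj_eq_neg_of_sq_eq_neg ha hx, complexConj_eq_neg_of_sq_eq_neg hb hy,
        neg_mul_neg]
  have hsq : (a * b : 𝓞 K) = k * k := by
    rw [hk]
    linear_combination (b : 𝓞 K) * hx - x ^ 2 * hy
  exact ⟨k, by exact_mod_cast hsq⟩

theorem unit_mul_complexConj_eq_one (u : (𝓞 K)ˣ) : (u : 𝓞 K) * σ u = 1 := by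
  obtain ⟨V, hV⟩ := exists_natCast_eq_mul_complexConj (u : 𝓞 K)
  have hdvd : ((V : ℤ) : 𝓞 K) ∣ (1 : ℤ) := by
    rw [Int.cast_natCast, hV, Int.cast_one]
    exact (u.isUnit.mul (u.isUnit.map (ringOfIntegersComplexConj K))).dvd
  have hV1 : V = 1 :=
    Nat.dvd_one.1 (by exact_mod_cast intCast_dvd_intCast_iff_of_free.1 hdvd)
  rw [← hV, hV1, Nat.cast_one]

theorem units_eq_one_or_neg_one (h1 : ∀ x : 𝓞 K, x ^ 2 ≠ -1) (h3 : ∀ x : 𝓞 K, x ^ 2 ≠ -3)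
    (u : (𝓞 K)ˣ) : u = 1 ∨ u = -1 := by
  obtain ⟨t, ht⟩ := exists_intCast_eq_add_complexConj (u : 𝓞 K)
  have hnorm := unit_mul_complexConj_eq_one u
  have hchar : (u : 𝓞 K) ^ 2 - t * u + 1 = 0 := by rw [ht, ← hnorm]; ring
  have ht4 : t ^ 2 ≤ 4 := by
    obtain ⟨D, hD⟩ := exists_natCast_eq_mul_complexConj ((u : 𝓞 K) - σ u)
    rw [map_sub, complexConj_complexConj] at hD
    have : (D : 𝓞 K) = 4 - (t : 𝓞 K) ^ 2 := by rw [hD, ht, ← mul_one 4, ← hnorm]; ring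
    have : (D : ℤ) = 4 - t ^ 2 := by exact_mod_cast this
    omega
  have : t ≤ 2 := by nlinarith
  have : -2 ≤ t := by nlinarith
  interval_cases t <;> push_cast at hchar
  · refine .inr (Units.ext (eq_neg_of_add_eq_zero_left (pow_eq_zero_iff two_ne_zero |>.1 ?_)))
    rw [Units.val_one]
    linear_combination hchar
  · exact absurd (by linear_combination 4 * hchar) (h3 (2 * u + 1))
  · exact absurd (by linear_combination hchar) (h1 u)
  · exact absurd (by linear_combination 4 * hchar) (h3 (2 * u - 1))
  · refine .inl (Units.ext (sub_eq_zero.1 (pow_eq_zero_iff two_ne_zero |>.1 ?_)))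
    rw [Units.val_one]
    linear_combination hchar

theorem exponent_eq_one_of_eq_pow {n m U : ℕ} (hn : Odd n) (hU : n < U) (hm : m ∣ n) {α β : 𝓞 K}
    (htrace : α + σ α = 1) (hnorm : α * σ α = (U : 𝓞 K) ^ n) (hβ : α = β ^ m) : m = 1 := by
  subst hβ
  obtain ⟨l, rfl⟩ := hm
  obtain ⟨hm, hl⟩ := Nat.odd_mul.1 hn
  obtain ⟨s, hs⟩ := exists_intCast_eq_add_complexConj β
  obtain ⟨V, hV⟩ := exists_natCast_eq_mul_complexConj β
  rw [map_pow] at htrace hnorm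
  have hVU : V = U ^ l := by
    have : V ^ m = (U ^ l) ^ m := by
      rw [← mul_pow, ← hV, mul_comm m, pow_mul] at hnorm
      exact_mod_cast hnorm
    exact Nat.pow_left_injective hm.pos.ne' this
  have hUV : U ≤ V := hVU ▸ Nat.le_self_pow hl.pos.ne' U
  have hmn : m ≤ m * l := Nat.le_mul_of_pos_right m hl.pos
  by_contra hm1
  have hdvd : (V : ℤ) ∣ m :=
    dvd_of_pow_add_pow_eq_one hs.symm (by exact_mod_cast hV.symm)
      (by have := hm.pos; omega) hm hm1 htrace
  have := Nat.le_of_dvd hm.pos (Int.natCast_dvd_natCast.1 hdvd)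
  omega

theorem two_mul_sub_one_sq {R : Type*} [CommRing R] {α c : R} (hα : α ^ 2 + c = α) :
    (2 * α - 1) ^ 2 = -(4 * c - 1) := by
  linear_combination 4 * hα

theorem complexConj_eq_one_sub {α : 𝓞 K} {c : ℤ} (hc : 0 < c) (hα : α ^ 2 + c = α) :
    σ α = 1 - α := by
  have hneg : σ (2 * α - 1) = -(2 * α - 1) :=
    complexConj_eq_neg_of_sq_eq_neg (a := 4 * c - 1) (by omega)
      (by exact_mod_cast two_mul_sub_one_sq hα)
  rw [map_sub, map_mul, map_one, map_ofNat] at hneg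
  exact mul_left_cancel₀ (two_ne_zero : (2 : 𝓞 K) ≠ 0) (by linear_combination hneg)

theorem units_eq_one_or_neg_one_of_sq_add_eq_self {α : 𝓞 K} {c : ℤ} (hc : 0 < c)
    (h3 : ¬ IsSquare (3 * (4 * c - 1))) (hα : α ^ 2 + c = α) (u : (𝓞 K)ˣ) : u = 1 ∨ u = -1 := by
  have hE : 0 < 4 * c - 1 := by omega
  have hδ : (2 * α - 1) ^ 2 = -((4 * c - 1 : ℤ) : 𝓞 K) := by
    exact_mod_cast two_mul_sub_one_sq hα
  refine units_eq_one_or_neg_one (fun x hx ↦ ?_) (fun x hx ↦ ?_) u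
  · have hsq := isSquare_mul_of_sq_eq_neg one_pos hE (by simpa using hx) hδ
    exact not_isSquare_four_mul_sub_one c (by rwa [one_mul] at hsq)
  · exact h3 (isSquare_mul_of_sq_eq_neg three_pos hE (by simpa using hx) hδ)

theorem dvd_natCard_classGroup_of_sq_add_eq_self {n U : ℕ} (hn : Odd n) (hU : n < U)
    (h3 : ¬ IsSquare (3 * (4 * (U : ℤ) ^ n - 1))) {α : 𝓞 K} (hα : α ^ 2 + (U : 𝓞 K) ^ n = α) :
    n ∣ Nat.card (ClassGroup (𝓞 K)) := by
  have hUn : 0 < (U : ℤ) ^ n := by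
    have : 0 < U := by omega
    positivity
  have hα' : α ^ 2 + ((U ^ n : ℤ) : 𝓞 K) = α := by simpa using hα
  have hconj := complexConj_eq_one_sub hUn hα'
  have htrace : α + σ α = 1 := by rw [hconj]; ring
  have hnorm : α * σ α = (U : 𝓞 K) ^ n := by rw [hconj]; linear_combination -hα
  have hα0 : α ≠ 0 := by
    rintro rfl
    rw [zero_mul] at hnorm
    exact hUn.ne (by exact_mod_cast hnorm)
  refine dvd_natCard_classGroup_of_mul_eq_pow hn.pos.ne' hα0 ⟨1, 1, by simpa using htrace⟩ hnorm
    (fun u ↦ ⟨u, ?_⟩) fun m hm β ↦ exponent_eq_one_of_eq_pow hn hU hm htrace hnorm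
  rcases units_eq_one_or_neg_one_of_sq_add_eq_self hUn h3 hα' u with rfl | rfl
  · exact one_pow n
  · exact hn.neg_one_pow

end ImaginaryQuadratic

section QuadField

theorem isQuadraticExtension_adjoin_simple {F L : Type*} [Field F] [Field L] [Algebra F L]
    {x : L} {a : F} (hx : x ^ 2 = algebraMap F L a) (ha : ¬ IsSquare a) :
    Algebra.IsQuadraticExtension F F⟮x⟯ := by
  have hirr : Irreducible (Polynomial.X ^ 2 - Polynomial.C a) :=
    X_pow_sub_C_irreducible_of_prime Nat.prime_two fun b hb ↦ ha ⟨b, by rw [← hb, sq]⟩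
  have hmonic := Polynomial.monic_X_pow_sub_C a two_ne_zero
  have hminpoly : minpoly F x = Polynomial.X ^ 2 - Polynomial.C a :=
    (minpoly.eq_of_irreducible_of_monic hirr (by simp [hx]) hmonic).symm
  refine ⟨?_⟩
  rw [adjoin.finrank ⟨_, hmonic, by simp [hx]⟩, hminpoly, Polynomial.natDegree_X_pow_sub_C]

theorem isTotallyComplex_of_sq_eq_intCast {K : Type*} [Field K] {x : K} {d : ℤ} (hd : d < 0)
    (hx : x ^ 2 = d) : IsTotallyComplex K := by
  refine ⟨fun w ↦ InfinitePlace.not_isReal_iff_isComplex.1 fun hw ↦ ?_⟩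
  have : (InfinitePlace.embedding_of_isReal hw x) ^ 2 = d := by rw [← map_pow, hx, map_intCast]
  have : (d : ℝ) < 0 := by exact_mod_cast hd
  nlinarith [sq_nonneg (InfinitePlace.embedding_of_isReal hw x)]

theorem exists_ringOfIntegers_sq_add_eq_self {K : Type*} [Field K] [CharZero K] {x : K}
    {y c : ℤ} (hy : y ≠ 0) (hx : x ^ 2 = y ^ 2 * (1 - 4 * c)) : ∃ α : 𝓞 K, α ^ 2 + c = α := by
  have hyK : (y : K) ≠ 0 := Int.cast_ne_zero.2 hy
  have hroot : ((1 + x / y) / 2) ^ 2 + c = (1 + x / y) / 2 := by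
    field_simp
    linear_combination hx
  have hint : IsIntegral ℤ ((1 + x / y) / 2) :=
    ⟨Polynomial.X ^ 2 - Polynomial.X + Polynomial.C c, by monicity!, by
      simpa [-eq_intCast, sub_add_eq_add_sub, sub_eq_zero] using hroot⟩
  obtain ⟨α, hα⟩ : ∃ α : 𝓞 K, (α : K) = (1 + x / y) / 2 := ⟨⟨_, hint⟩, rfl⟩
  exact ⟨α, RingOfIntegers.ext (by simpa [hα] using hroot)⟩

theorem exists_quadField_sq_eq (d : ℤ) : ∃ x : quadField d, x ^ 2 = d :=
  ⟨⟨_, mem_adjoin_simple_self ℚ _⟩, Subtype.ext (by simp)⟩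

theorem isQuadraticExtension_quadField_s14 {d : ℤ} (hd : d < 0) :
    Algebra.IsQuadraticExtension ℚ (quadField d) :=
  isQuadraticExtension_adjoin_simple (a := (d : ℚ)) (by simp)
    fun h ↦ (Int.cast_lt_zero.2 hd).not_ge h.nonneg

theorem dvd_quadClassNumber {n U : ℕ} (hn : Odd n) (hU : n < U) (hU3 : ¬ U ≡ 1 [MOD 3]) {y : ℤ}
    (hy : y ≠ 0) : n ∣ quadClassNumber (y ^ 2 * (1 - 4 * (U : ℤ) ^ n)) := by
  set d : ℤ := y ^ 2 * (1 - 4 * (U : ℤ) ^ n) with hd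
  have hd0 : d < 0 := by
    have : 0 < U := by omega
    have : 0 < (U : ℤ) ^ n := by positivity
    exact mul_neg_of_pos_of_neg (by positivity) (by omega)
  obtain ⟨x, hx⟩ := exists_quadField_sq_eq d
  have := isQuadraticExtension_quadField_s14 hd0
  have : NumberField (quadField d) := {}
  have : IsTotallyComplex (quadField d) := isTotallyComplex_of_sq_eq_intCast hd0 hx
  obtain ⟨α, hα⟩ := exists_ringOfIntegers_sq_add_eq_self (c := (U : ℤ) ^ n) hy
    (by rw [hx, hd]; push_cast; ring)
  exact dvd_natCard_classGroup_of_sq_add_eq_self hn hU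
    (not_isSquare_three_mul_four_mul_pow_sub_one hn hU3) (by simpa using hα)

theorem dvd_quadClassNumber_and_add_one {n U W : ℕ} (hn : Odd n) (hU : n < U) (hU3 : 3 ∣ U)
    (hW : 4 * U ^ n = W + 1) :
    n ∣ quadClassNumber (-4 * (W : ℤ) ^ n) ∧ n ∣ quadClassNumber (-4 * (W : ℤ) ^ n + 1) := by
  have hUn : U ≤ U ^ n := Nat.le_self_pow hn.pos.ne' U
  have h3 : 3 ∣ U ^ n := dvd_pow hU3 hn.pos.ne'
  constructor
  · obtain ⟨j, rfl⟩ := hn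
    have hd : -4 * (W : ℤ) ^ (2 * j + 1) =
        (2 * (W : ℤ) ^ j) ^ 2 * (1 - 4 * (U : ℤ) ^ (2 * j + 1)) := by
      have : 4 * (U : ℤ) ^ (2 * j + 1) = W + 1 := by exact_mod_cast hW
      rw [this]
      ring
    rw [hd]
    refine dvd_quadClassNumber ⟨j, rfl⟩ hU (by unfold Nat.ModEq; omega) ?_
    have : 0 < W := by omega
    positivity
  · have hd : -4 * (W : ℤ) ^ n + 1 = 1 ^ 2 * (1 - 4 * (W : ℤ) ^ n) := by ring
    rw [hd]
    exact dvd_quadClassNumber hn (by omega) (by unfold Nat.ModEq; omega) one_ne_zero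

end QuadField

theorem stmt_14 (n : ℕ) (hn : 3 ≤ n) (hno : Odd n) :
    {d : ℤ | d < 0 ∧ d + 1 < 0 ∧
      n ∣ quadClassNumber d ∧ n ∣ quadClassNumber (d + 1)}.Infinite := by
  refine Set.infinite_of_forall_exists_lt fun N ↦ ?_
  let U := 3 * (n + N.natAbs + 1)
  have hUn : U ≤ U ^ n := Nat.le_self_pow hno.pos.ne' U
  obtain ⟨W, hW⟩ : ∃ W, 4 * U ^ n = W + 1 := ⟨4 * U ^ n - 1, by omega⟩
  have hWn : (W : ℤ) ≤ (W : ℤ) ^ n := by exact_mod_cast Nat.le_self_pow hno.pos.ne' W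
  exact ⟨-4 * (W : ℤ) ^ n, ⟨by omega, by omega,
    dvd_quadClassNumber_and_add_one hno (by omega) (dvd_mul_right 3 _) hW⟩, by omega⟩
end
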